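/- arXiv:2406.00686 — 3 statements merged into one kernel-verified Lean document; each statement's English description precedes it below -/
import Mathlib

section
/- Let n ≥ 2, let p be a real polynomial of degree n such that every real zero of p is simple and p′ has n − 1 distinct real zeros ξ₁ < ⋯ < ξ_{n−1}, and let 0 ≤ κ < 1/2. Consider the intervals I₁ = (−∞, ξ₁), I_k = (ξ_{k−1}, ξ_k) for 2 ≤ k ≤ n − 1, and I_n = (ξ_{n−1}, ∞). Then: (i) if a bounded interval I_k contains no zero of p, then Z_{I_k}(H_κ[p]) = 1; (ii) if a bounded interval I_k contains a zero of p, then Z_{I_k}(H_κ[p]) = 0 or 2; (iii) if an unbounded interval I₁ or I_n contains no zero of p, then Z over that interval is 0; (iv) if an unbounded interval I₁ or I_n contains a zero of p, then Z over that interval is 1. Here Z_I(q) counts roots of q in I with multiplicity. -/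
/-!
Write `f = p'` and `H = Hk κ p`. For each interval `I` between consecutive zeros of `f`, the parity
of the number of zeros of `H` in `I` follows from the signs at the ends (`odd_count_Ioo`,
`even_count_Ioi`, `even_count_Iio`): at a zero of `f`, `H = -p p''`, while at infinity `H` is
negative because its degree is even and its leading coefficient is negative. The result is that the
number of zeros of `H` in `I` has opposite parity to that of `p` if `I` is bounded, and the same
parity if `I` is unbounded. It then suffices that `H` has at most two zeros in a bounded `I`
(`Hk_count_le_two`) and at most one in an unbounded `I` (`Hk_count_le_one`), since `p` has at
most one zero in `I`.

For the upper bound, on an interval where `f` and `p''` do not vanish, the derivative of `H / p''`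
has numerator `-f T` with `T = (1 - 2κ) f'² + κ f f''` (`wronskian_Hk`), so Rolle's theorem with
multiplicities (`rolle_wronskian`) reduces the claim to counting the zeros of `T`. Let
`S_j = ∑ 1 / (x - ξ_i) ^ j`. Then `T = f² ((1 - κ) S₁² - κ S₂)`, and where `T` vanishes `T'` is a
positive multiple of `(S₁ S₃ - S₂²) / S₁`. As `κ < 1/2`, `T = 0` forces `S₁² < S₂`, and with
`S₃² ≤ S₂³` this gives `S₁ S₃ < S₂²`. So `T` crosses zero in one direction only and has at most one
zero (`auxT_sign`, `at_most_one`). On an unbounded `I`, `S₂ ≤ S₁²` and `T` has no zero. Finally,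
for `κ > 0`, the zeros of `H` in a bounded `I` all lie on one side of the zero of `p''`; for
`κ = 0`, `H = -p p''` and the zeros of the two factors are counted separately.
-/

open Polynomial

/-- `Hk κ p = κ·(p')² − p·p''`. -/
noncomputable def Hk (κ : ℝ) (p : ℝ[X]) : ℝ[X] :=
  C κ * (derivative p) ^ 2 - p * derivative (derivative p)

/-- `Zreal q` : number of real roots of `q` counted with multiplicity. -/
noncomputable def Zreal (q : ℝ[X]) : ℕ := Multiset.card q.roots

/-- `Zcomplex q` : number of non-real complex roots of `q` counted with multiplicity. -/
noncomputable def Zcomplex (q : ℝ[X]) : ℕ :=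
  Multiset.card ((q.map (algebraMap ℝ ℂ)).roots.filter (fun z => z.im ≠ 0))

/-- Number of real zeros of `Q_κ[p] = H_κ[p]/(p')²` counted with multiplicity. -/
noncomputable def ZQ (κ : ℝ) (p : ℝ[X]) : ℕ :=
  ∑ᶠ x : ℝ, (rootMultiplicity x (Hk κ p) - 2 * rootMultiplicity x (derivative p))

open scoped Classical in
/-- `ZIcount I q` : number of roots of `q` in the set `I` counted with multiplicity. -/
noncomputable def ZIcount (I : Set ℝ) (q : ℝ[X]) : ℕ :=
  Multiset.card (q.roots.filter (fun x => x ∈ I))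

/-- `Zdist q` : number of distinct real roots of `q`. -/
noncomputable def Zdist (q : ℝ[X]) : ℕ := q.roots.toFinset.card

/-! ### Counting roots in a set, and parity -/

theorem ZIcount_eq_zero {I : Set ℝ} {q : ℝ[X]} (h : ∀ x ∈ I, q.eval x ≠ 0) :
    ZIcount I q = 0 := by
  classical
  unfold ZIcount
  rw [Multiset.card_eq_zero, Multiset.filter_eq_nil]
  intro x hx hI
  exact h x hI (isRoot_of_mem_roots hx)

theorem ZIcount_mul {I : Set ℝ} {q r : ℝ[X]} (h : q * r ≠ 0) :
    ZIcount I (q * r) = ZIcount I q + ZIcount I r := by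
  unfold ZIcount
  rw [roots_mul h, Multiset.filter_add, Multiset.card_add]

theorem ZIcount_X_sub_C {I : Set ℝ} {r : ℝ} (h : r ∈ I) : ZIcount I (X - C r) = 1 := by
  unfold ZIcount
  rw [roots_X_sub_C, Multiset.filter_singleton, if_pos h, Multiset.card_singleton]

theorem ZIcount_pos {I : Set ℝ} {q : ℝ[X]} (hq : q ≠ 0) {x : ℝ} (hx : x ∈ I)
    (h : q.eval x = 0) : 0 < ZIcount I q := by
  classical
  unfold ZIcount
  exact Multiset.card_pos_iff_exists_mem.2 ⟨x, Multiset.mem_filter.2 ⟨(mem_roots hq).2 h, hx⟩⟩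

theorem ZIcount_neg {I : Set ℝ} {q : ℝ[X]} : ZIcount I (-q) = ZIcount I q := by
  unfold ZIcount
  rw [roots_neg]

theorem ZIcount_le {I J : Set ℝ} {q : ℝ[X]} (h : ∀ x ∈ I, q.eval x = 0 → x ∈ J) :
    ZIcount I q ≤ ZIcount J q := by
  classical
  unfold ZIcount
  apply Multiset.card_le_card
  rw [Multiset.le_filter]
  refine ⟨Multiset.filter_le _ _, fun x hx => ?_⟩
  rw [Multiset.mem_filter] at hx
  exact h x hx.2 (isRoot_of_mem_roots hx.1)

open scoped Classical in
theorem ZIcount_eq_sum (I : Set ℝ) (q : ℝ[X]) :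
    ZIcount I q = ∑ x ∈ q.roots.toFinset with x ∈ I, rootMultiplicity x q := by
  unfold ZIcount
  rw [← Multiset.toFinset_sum_count_eq, Multiset.toFinset_filter]
  refine Finset.sum_congr rfl fun x hx => ?_
  rw [Multiset.count_filter_of_pos (Finset.mem_filter.1 hx).2, count_roots]

theorem exists_root_of_mul_neg {q : ℝ[X]} {a b : ℝ} (hab : a ≤ b)
    (h : q.eval a * q.eval b < 0) : ∃ x ∈ Set.Ioo a b, q.eval x = 0 := by
  have hne : ∀ y : ℝ, (y = a ∨ y = b) → q.eval y ≠ 0 := by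
    rintro y (rfl | rfl) h0 <;> simp [h0] at h
  have hc : ContinuousOn (fun x => q.eval x) (Set.uIcc a b) := q.continuous.continuousOn
  have h0 : (0 : ℝ) ∈ Set.uIcc (q.eval a) (q.eval b) := by
    rw [Set.mem_uIcc]
    rcases mul_neg_iff.1 h with h | h
    · exact Or.inr ⟨h.2.le, h.1.le⟩
    · exact Or.inl ⟨h.1.le, h.2.le⟩
  obtain ⟨x, hx, hx0⟩ := intermediate_value_uIcc hc h0
  rw [Set.uIcc_of_le hab] at hx
  refine ⟨x, ⟨lt_of_le_of_ne hx.1 ?_, lt_of_le_of_ne hx.2 ?_⟩, hx0⟩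
  · intro h; exact hne x (Or.inl h.symm) hx0
  · intro h; exact hne x (Or.inr h) hx0

theorem same_sign {I : Set ℝ} (hI : I.OrdConnected) {q : ℝ[X]} (h : ∀ x ∈ I, q.eval x ≠ 0)
    {x y : ℝ} (hx : x ∈ I) (hy : y ∈ I) : 0 < q.eval x * q.eval y := by
  by_contra! hc
  have hc : q.eval x * q.eval y < 0 := lt_of_le_of_ne hc (mul_ne_zero (h x hx) (h y hy))
  rcases le_total x y with hxy | hxy
  · obtain ⟨z, hz, hz0⟩ := exists_root_of_mul_neg hxy hc
    exact h z (hI.out hx hy (Set.Ioo_subset_Icc_self hz)) hz0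
  · rw [mul_comm] at hc
    obtain ⟨z, hz, hz0⟩ := exists_root_of_mul_neg hxy hc
    exact h z (hI.out hy hx (Set.Ioo_subset_Icc_self hz)) hz0

/-- The parity of the number of roots between `a` and `b` is given by the signs of `q` at the
endpoints: splitting off a factor `X - x` with `a < x < b` flips the sign of `q(a) q(b)`. -/
theorem parity_Ioo {a b : ℝ} (hab : a < b) (q : ℝ[X]) (ha : q.eval a ≠ 0) (hb : q.eval b ≠ 0) :
    0 < (-1 : ℝ) ^ ZIcount (Set.Ioo a b) q * (q.eval a * q.eval b) := by
  induction hN : ZIcount (Set.Ioo a b) q generalizing q with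
  | zero =>
    by_contra! hc
    rw [pow_zero, one_mul] at hc
    obtain ⟨x, hx, hx0⟩ := exists_root_of_mul_neg hab.le (lt_of_le_of_ne hc (mul_ne_zero ha hb))
    have hq : q ≠ 0 := by rintro rfl; simp at ha
    have := ZIcount_pos hq hx hx0
    omega
  | succ N ih =>
    have hex : ∃ x ∈ Set.Ioo a b, q.eval x = 0 := by
      by_contra! hc
      have := ZIcount_eq_zero hc
      omega
    obtain ⟨x, hx, hx0⟩ := hex
    have hq : q ≠ 0 := by rintro rfl; simp at ha
    obtain ⟨g, rfl⟩ := dvd_iff_isRoot.2 hx0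
    rw [ZIcount_mul hq, ZIcount_X_sub_C hx] at hN
    simp only [eval_mul, eval_sub, eval_X, eval_C] at ha hb ⊢
    have := ih g (right_ne_zero_of_mul ha) (right_ne_zero_of_mul hb) (by omega)
    have h2 : 0 < (x - a) * (b - x) := mul_pos (sub_pos.2 hx.1) (sub_pos.2 hx.2)
    rw [pow_succ]
    nlinarith [mul_pos this h2]

theorem exists_sign_right (q : ℝ[X]) (hq : q ≠ 0) (B : ℝ) :
    ∃ b, B < b ∧ 0 < q.eval b * q.leadingCoeff := by
  have hlc := leadingCoeff_ne_zero.2 hq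
  by_cases hd : q.natDegree = 0
  · rw [natDegree_eq_zero] at hd
    obtain ⟨c, rfl⟩ := hd
    refine ⟨B + 1, by linarith, ?_⟩
    simp at hlc ⊢
    positivity
  · have h1 : Filter.Tendsto (fun x => (q * C q.leadingCoeff).eval x) Filter.atTop
        Filter.atTop := by
      apply Polynomial.tendsto_atTop_of_leadingCoeff_nonneg
      · rw [degree_mul_C hlc]; exact natDegree_pos_iff_degree_pos.1 (Nat.pos_of_ne_zero hd)
      · rw [leadingCoeff_mul, leadingCoeff_C]; exact mul_self_nonneg _
    obtain ⟨b, hb, hb2⟩ := ((h1.eventually_gt_atTop 0).and (Filter.eventually_gt_atTop B)).exists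
    exact ⟨b, hb2, by simpa using hb⟩

theorem exists_root_bound (q : ℝ[X]) (hq : q ≠ 0) : ∃ B, ∀ x, q.eval x = 0 → |x| ≤ B := by
  classical
  obtain ⟨B, hB⟩ := (q.roots.toFinset.image (fun x => |x|)).bddAbove
  exact ⟨B, fun x hx => hB (by simpa [hq] using ⟨x, hx, rfl⟩)⟩

/-- Version of `parity_Ioo` with `b` at `+∞`, where the sign of `q` is that of its leading
coefficient. -/
theorem parity_Ioi (a : ℝ) (q : ℝ[X]) (ha : q.eval a ≠ 0) :
    0 < (-1 : ℝ) ^ ZIcount (Set.Ioi a) q * (q.eval a * q.leadingCoeff) := by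
  have hq : q ≠ 0 := by rintro rfl; simp at ha
  obtain ⟨B, hB⟩ := exists_root_bound q hq
  obtain ⟨b, hb, hb0⟩ := exists_sign_right q hq (max a B)
  have hab : a < b := (le_max_left _ _).trans_lt hb
  have hBb : B < b := (le_max_right _ _).trans_lt hb
  have hb' : q.eval b ≠ 0 := left_ne_zero_of_mul hb0.ne'
  have hc : ZIcount (Set.Ioi a) q = ZIcount (Set.Ioo a b) q :=
    le_antisymm (ZIcount_le fun x hx h => ⟨hx, ((le_abs_self x).trans (hB x h)).trans_lt hBb⟩)
      (ZIcount_le fun x hx _ => hx.1)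
  have h := mul_pos (parity_Ioo hab q ha hb') hb0
  rw [hc]
  have h2 : 0 < q.eval b ^ 2 := by positivity
  refine pos_of_mul_pos_left (b := q.eval b ^ 2) ?_ h2.le
  linarith

/-- Version of `parity_Ioo` with the left endpoint at `-∞`, where the sign of `q` is that of its
leading coefficient times `(-1) ^ natDegree`. -/
theorem parity_Iio (a : ℝ) (q : ℝ[X]) (ha : q.eval a ≠ 0) :
    0 < (-1 : ℝ) ^ ZIcount (Set.Iio a) q *
      (q.eval a * ((-1) ^ q.natDegree * q.leadingCoeff)) := by
  have hq : q ≠ 0 := by rintro rfl; simp at ha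
  obtain ⟨B, hB⟩ := exists_root_bound q hq
  have hq' : q.comp (-X) ≠ 0 := by
    rw [Ne, comp_neg_X_eq_zero_iff]; exact hq
  obtain ⟨b, hb, hb0⟩ := exists_sign_right (q.comp (-X)) hq' (max (-a) B)
  have hab : -b < a := by linarith [(le_max_left (-a) B).trans_lt hb]
  have hBb : B < b := (le_max_right _ _).trans_lt hb
  rw [comp_neg_X_leadingCoeff_eq] at hb0
  simp only [eval_comp, eval_neg, eval_X] at hb0
  have hb' : q.eval (-b) ≠ 0 := left_ne_zero_of_mul hb0.ne'
  have hc : ZIcount (Set.Iio a) q = ZIcount (Set.Ioo (-b) a) q :=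
    le_antisymm (ZIcount_le fun x hx h => ⟨by linarith [(neg_abs_le x), (hB x h)], hx⟩)
      (ZIcount_le fun x hx _ => hx.2)
  have h := mul_pos (parity_Ioo hab q hb' ha) hb0
  rw [hc]
  have h2 : 0 < q.eval (-b) ^ 2 := by positivity
  refine pos_of_mul_pos_left (b := q.eval (-b) ^ 2) ?_ h2.le
  linarith

/-! ### Power sums of a real-rooted polynomial -/

theorem cube_sum_sq_le_aux {A B t : ℝ} (hA : 0 ≤ A) (h : B ^ 2 ≤ A ^ 3) :
    (B + t ^ 3) ^ 2 ≤ (A + t ^ 2) ^ 3 := by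
  have h1 : 2 * B * t ≤ A ^ 2 + t ^ 2 * A := by
    rcases hA.eq_or_lt with rfl | hA
    · have : B = 0 := by
        have : B ^ 2 ≤ 0 := by simpa using h
        exact pow_eq_zero_iff (two_ne_zero) |>.1 (le_antisymm this (sq_nonneg _))
      simp [this]
    · refine le_of_mul_le_mul_left ?_ hA
      nlinarith [sq_nonneg (B - t * A)]
  nlinarith [mul_le_mul_of_nonneg_left h1 (sq_nonneg t), mul_nonneg (sq_nonneg t) (sq_nonneg A),
    mul_nonneg (sq_nonneg (t ^ 2)) hA]

/-- Here `S_j = ∑ 1 / (x - a) ^ j` over `a ∈ m`; the derivatives of `g = ∏ (X - a)` at `x` are `g(x)`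
times polynomials in the `S_j`. The bound `S₃² ≤ S₂³` says that the `ℓ³`-norm is at most the
`ℓ²`-norm, and `S₂ ≤ S₁²` holds when all the `x - a` have the same sign. -/
theorem prod_power_sums (m : Multiset ℝ) (x : ℝ) (hx : x ∉ m) :
    ∃ S₁ S₂ S₃ : ℝ, ∃ g : ℝ[X], g = (m.map (fun a => X - C a)).prod ∧
      (derivative g).eval x = g.eval x * S₁ ∧
      (derivative (derivative g)).eval x = g.eval x * (S₁ ^ 2 - S₂) ∧
      (derivative (derivative (derivative g))).eval x =
        g.eval x * (S₁ ^ 3 - 3 * S₁ * S₂ + 2 * S₃) ∧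
      0 ≤ S₂ ∧ (m ≠ 0 → 0 < S₂) ∧ S₃ ^ 2 ≤ S₂ ^ 3 ∧
      ((∀ r ∈ m, r < x) → 0 ≤ S₁ ∧ S₂ ≤ S₁ ^ 2) ∧
      ((∀ r ∈ m, x < r) → S₁ ≤ 0 ∧ S₂ ≤ S₁ ^ 2) := by
  induction m using Multiset.induction_on with
  | empty => exact ⟨0, 0, 0, 1, by simp⟩
  | cons a m ih =>
    rw [Multiset.mem_cons, not_or] at hx
    obtain ⟨S₁, S₂, S₃, g, hg, h1, h2, h3, hS2, -, hS3, hr, hl⟩ := ih hx.2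
    have hxa : x - a ≠ 0 := sub_ne_zero.2 hx.1
    obtain ⟨t, ht⟩ : ∃ t, t = (x - a)⁻¹ := ⟨_, rfl⟩
    have hta : (x - a) * t = 1 := by rw [ht]; exact mul_inv_cancel₀ hxa
    have ht0 : t ≠ 0 := by rw [ht]; exact inv_ne_zero hxa
    have ht2 : 0 < t ^ 2 := by positivity
    refine ⟨S₁ + t, S₂ + t ^ 2, S₃ + t ^ 3, (X - C a) * g, ?_, ?_, ?_, ?_, by positivity,
      fun _ => by positivity, cube_sum_sq_le_aux hS2 hS3, ?_, ?_⟩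
    · rw [Multiset.map_cons, Multiset.prod_cons, hg]
    · simp only [derivative_mul, derivative_sub, derivative_X, derivative_C, eval_add, eval_mul,
        eval_sub, eval_X, eval_C, eval_one, eval_zero, h1]
      linear_combination (-g.eval x) * hta
    · simp only [derivative_mul, derivative_sub, derivative_X, derivative_C, derivative_add,
        derivative_one, derivative_zero, eval_add, eval_mul,
        eval_sub, eval_X, eval_C, eval_one, eval_zero, h1, h2]
      linear_combination (-2 * g.eval x * S₁) * hta
    · simp only [derivative_mul, derivative_sub, derivative_X, derivative_C, derivative_add,
        derivative_one, derivative_zero, eval_add, eval_mul,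
        eval_sub, eval_X, eval_C, eval_one, eval_zero, h1, h2, h3]
      linear_combination (-3 * g.eval x * (S₁ ^ 2 - S₂)) * hta
    · intro h
      obtain ⟨h0, h4⟩ := hr fun r hr => h r (Multiset.mem_cons_of_mem hr)
      have : 0 < t := by
        rw [ht]; exact inv_pos.2 (sub_pos.2 (h a (Multiset.mem_cons_self a m)))
      exact ⟨by positivity, by nlinarith [mul_nonneg h0 this.le]⟩
    · intro h
      obtain ⟨h0, h4⟩ := hl fun r hr => h r (Multiset.mem_cons_of_mem hr)
      have : t < 0 := by
        rw [ht]; exact inv_lt_zero.2 (sub_neg.2 (h a (Multiset.mem_cons_self a m)))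
      exact ⟨by linarith, by nlinarith [mul_nonneg (neg_nonneg.2 h0) (neg_nonneg.2 this.le)]⟩

/-- `prod_power_sums` for the roots of a nonconstant split polynomial. -/
theorem power_sums {f : ℝ[X]} (hf : f.Splits) (hd : f.natDegree ≠ 0) {x : ℝ}
    (hx : f.eval x ≠ 0) :
    ∃ S₁ S₂ S₃ : ℝ,
      (derivative f).eval x = f.eval x * S₁ ∧
      (derivative (derivative f)).eval x = f.eval x * (S₁ ^ 2 - S₂) ∧
      (derivative (derivative (derivative f))).eval x =
        f.eval x * (S₁ ^ 3 - 3 * S₁ * S₂ + 2 * S₃) ∧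
      0 < S₂ ∧ S₃ ^ 2 ≤ S₂ ^ 3 ∧
      (((∀ r, f.eval r = 0 → r < x) ∨ (∀ r, f.eval r = 0 → x < r)) → S₂ ≤ S₁ ^ 2) := by
  have hf0 : f ≠ 0 := by rintro rfl; simp at hx
  obtain ⟨S₁, S₂, S₃, g, hg, h1, h2, h3, -, hS2, hS3, hr, hl⟩ :=
    prod_power_sums f.roots x (fun h => hx (isRoot_of_mem_roots h))
  have hfg : f = C f.leadingCoeff * g := by rw [hg]; exact hf.eq_prod_roots
  generalize f.leadingCoeff = c at hfg
  have hm : f.roots ≠ 0 := by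
    intro h
    have := splits_iff_card_roots.1 hf
    rw [h] at this
    exact hd this.symm
  refine ⟨S₁, S₂, S₃, ?_, ?_, ?_, hS2 hm, hS3, ?_⟩
  · rw [hfg]; simp [h1, mul_assoc]
  · rw [hfg]; simp [h2, mul_assoc]
  · rw [hfg]; simp [h3, mul_assoc]
  · rintro (h | h)
    · exact (hr fun r hr => h r (isRoot_of_mem_roots hr)).2
    · exact (hl fun r hr => h r (isRoot_of_mem_roots hr)).2

/-! ### Rolle with multiplicities -/

/-- Rolle's theorem with multiplicities for the quotient `q / u` on an interval where `u` has no
zero; the numerator of `(q / u)'` is the Wronskian. -/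
theorem rolle_wronskian {J : Set ℝ} (hJ : J.OrdConnected) {u q : ℝ[X]}
    (hu : ∀ x ∈ J, u.eval x ≠ 0) (hW : u * derivative q - derivative u * q ≠ 0) :
    ZIcount J q ≤ ZIcount J (u * derivative q - derivative u * q) + 1 := by
  classical
  set W := u * derivative q - derivative u * q with hWdef
  have hq : q ≠ 0 := by rintro rfl; simp [hWdef] at hW
  have hmult : ∀ x, rootMultiplicity x q - 1 ≤ rootMultiplicity x W := by
    intro x
    rw [le_rootMultiplicity_iff hW]
    have h1 := pow_rootMultiplicity_dvd q x
    exact dvd_sub (Dvd.dvd.mul_left (pow_sub_one_dvd_derivative_of_pow_dvd h1) _)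
      (Dvd.dvd.mul_left ((pow_dvd_pow _ (Nat.sub_le _ _)).trans h1) _)
  set A := q.roots.toFinset.filter (· ∈ J) with hA
  set B := W.roots.toFinset.filter (· ∈ J) with hB
  have hmA : ∀ x, x ∈ A ↔ q.eval x = 0 ∧ x ∈ J := by intro x; simp [hA, hq]
  have hmB : ∀ x, x ∈ B ↔ W.eval x = 0 ∧ x ∈ J := by intro x; simp [hB, hW]
  have hcard : A.card ≤ (B \ A).card + 1 := by
    -- between two consecutive roots of `q`, Rolle for `q / u` gives a root of `W`
    apply Finset.card_le_sdiff_of_interleaved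
    intro x hx y hy hxy hno
    rw [hmA] at hx hy
    have hsub : Set.Icc x y ⊆ J := hJ.out hx.2 hy.2
    obtain ⟨z, hz, hz0⟩ := exists_hasDerivAt_eq_zero (f := fun z => q.eval z / u.eval z)
      (f' := fun z => ((derivative q).eval z * u.eval z - q.eval z * (derivative u).eval z) /
        u.eval z ^ 2) hxy
      (q.continuous.continuousOn.div u.continuous.continuousOn fun z hz => hu z (hsub hz))
      (by simp [hx.1, hy.1])
      (fun z hz => (q.hasDerivAt z).div (u.hasDerivAt z)
        (hu z (hsub (Set.Ioo_subset_Icc_self hz))))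
    have hzJ := hsub (Set.Ioo_subset_Icc_self hz)
    refine ⟨z, (hmB z).2 ⟨?_, hzJ⟩, hz⟩
    rw [div_eq_zero_iff] at hz0
    have := hz0.resolve_right (pow_ne_zero 2 (hu z hzJ))
    simp only [hWdef, eval_sub, eval_mul]
    linarith
  rw [ZIcount_eq_sum, ZIcount_eq_sum]
  calc ∑ x ∈ A, rootMultiplicity x q = ∑ x ∈ A, (rootMultiplicity x q - 1 + 1) := by
        refine Finset.sum_congr rfl fun x hx => ?_
        have := (rootMultiplicity_pos hq).2 ((hmA x).1 hx).1
        omega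
    _ = ∑ x ∈ A, (rootMultiplicity x q - 1) + A.card := by
        rw [Finset.sum_add_distrib, Finset.card_eq_sum_ones]
    _ ≤ ∑ x ∈ A, rootMultiplicity x W + ((B \ A).card + 1) :=
        add_le_add (Finset.sum_le_sum fun x _ => hmult x) hcard
    _ ≤ ∑ x ∈ A, rootMultiplicity x W + (∑ x ∈ B \ A, rootMultiplicity x W + 1) := by
        gcongr
        rw [Finset.card_eq_sum_ones]
        refine Finset.sum_le_sum fun x hx => ?_
        exact (rootMultiplicity_pos hW).2 ((hmB x).1 (Finset.mem_sdiff.1 hx).1).1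
    _ = ∑ x ∈ A ∪ B, rootMultiplicity x W + 1 := by
        rw [← add_assoc, ← Finset.sum_union Finset.disjoint_sdiff, Finset.union_sdiff_self_eq_union]
    _ = ∑ x ∈ B, rootMultiplicity x W + 1 := by
        congr 1
        symm
        refine Finset.sum_subset Finset.subset_union_right fun x hx hxB => ?_
        have hxA : x ∈ A := (Finset.mem_union.1 hx).resolve_right hxB
        refine rootMultiplicity_eq_zero fun h => hxB ((hmB x).2 ⟨h, ((hmA x).1 hxA).2⟩)

/-- If `q'` has the sign of `-e` at every root of `q` in `J`, and `e` has constant sign there, the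
roots are simple and no two can be consecutive. -/
theorem at_most_one {J : Set ℝ} (hJ : J.OrdConnected) {e q : ℝ[X]}
    (he : ∀ x ∈ J, e.eval x ≠ 0)
    (h : ∀ x ∈ J, q.eval x = 0 → e.eval x * (derivative q).eval x < 0) :
    ZIcount J q ≤ 1 := by
  classical
  by_cases hq : q = 0
  · subst hq; simp [ZIcount]
  rw [ZIcount_eq_sum]
  set A := q.roots.toFinset.filter (· ∈ J) with hA
  have hmA : ∀ x, x ∈ A ↔ q.eval x = 0 ∧ x ∈ J := by intro x; simp [hA, hq]
  have hone : ∀ x ∈ A, rootMultiplicity x q = 1 := by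
    intro x hx
    rw [hmA] at hx
    refine le_antisymm ?_ ((rootMultiplicity_pos hq).2 hx.1)
    by_contra! hc
    have := ((one_lt_rootMultiplicity_iff_isRoot hq).1 hc).2
    have h2 := h x hx.2 hx.1
    rw [IsRoot.def] at this
    simp [this] at h2
  rw [Finset.sum_congr rfl hone, ← Finset.card_eq_sum_ones]
  have := Finset.card_le_sdiff_of_interleaved (s := A) (t := ∅) ?_
  · simpa using this
  intro r hr s hs hrs hno
  exfalso
  have hr' := (hmA r).1 hr
  have hs' := (hmA s).1 hs
  have hsub : Set.Icc r s ⊆ J := hJ.out hr'.2 hs'.2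
  obtain ⟨g₁, hg₁⟩ := dvd_iff_isRoot.2 hr'.1
  have h1 : g₁.eval s = 0 := by
    have := hs'.1
    rw [hg₁] at this
    simpa [sub_ne_zero.2 hrs.ne'] using this
  obtain ⟨g, rfl⟩ := dvd_iff_isRoot.2 h1
  have hr2 := h r hr'.2 hr'.1
  have hs2 := h s hs'.2 hs'.1
  rw [hg₁] at hr2 hs2
  simp only [derivative_mul, derivative_sub, derivative_X, derivative_C, eval_add, eval_mul,
        eval_sub, eval_X, eval_C, eval_one, eval_zero] at hr2 hs2
  ring_nf at hr2 hs2
  have hsr : 0 < s - r := sub_pos.2 hrs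
  have hr3 : 0 < (e * g).eval r := by
    rw [eval_mul]; by_contra! hc
    nlinarith [mul_nonneg hsr.le (neg_nonneg.2 hc)]
  have hs3 : (e * g).eval s < 0 := by
    rw [eval_mul]; by_contra! hc
    nlinarith [mul_nonneg hsr.le hc]
  obtain ⟨z, hz, hz0⟩ := exists_root_of_mul_neg hrs.le (mul_neg_of_pos_of_neg hr3 hs3)
  have hzJ := hsub (Set.Ioo_subset_Icc_self hz)
  rw [eval_mul] at hz0
  have hz1 := (mul_eq_zero.1 hz0).resolve_left (he z hzJ)
  exact hno z ((hmA z).2 ⟨by rw [hg₁]; simp [hz1], hzJ⟩) hz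

/-! ### Upper bounds for the number of zeros -/

/-- The polynomial `(1 - 2κ)·(f')² + κ·f·f''`. For `f = p'` it is, up to the factor `-f`, the
Wronskian of `p''` and `Hk κ p`. -/
noncomputable def auxT (κ : ℝ) (f : ℝ[X]) : ℝ[X] :=
  C (1 - 2 * κ) * (derivative f) ^ 2 + C κ * (f * derivative (derivative f))

theorem wronskian_Hk (κ : ℝ) (p : ℝ[X]) :
    derivative (derivative p) * derivative (Hk κ p) -
      derivative (derivative (derivative p)) * Hk κ p =
    -(derivative p * auxT κ (derivative p)) := by
  simp only [Hk, auxT, derivative_mul, derivative_sub, derivative_C, derivative_pow, C_sub, C_mul,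
    C_1]
  simp only [Nat.cast_ofNat, map_ofNat]
  ring

/-- On an interval without zeros of `p'` and `p''`, this is Rolle for `Hk κ p / p''`. -/
theorem Hk_count_le_aux {J : Set ℝ} (hJ : J.OrdConnected) {p : ℝ[X]} (κ : ℝ)
    (hf : ∀ x ∈ J, (derivative p).eval x ≠ 0)
    (hf' : ∀ x ∈ J, (derivative (derivative p)).eval x ≠ 0)
    (hT : auxT κ (derivative p) ≠ 0) :
    ZIcount J (Hk κ p) ≤ ZIcount J (auxT κ (derivative p)) + 1 := by
  have h0 : derivative p * auxT κ (derivative p) ≠ 0 := by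
    refine mul_ne_zero (fun h => hT ?_) hT
    simp [auxT, h]
  have h := rolle_wronskian hJ hf' (q := Hk κ p) (by rw [wronskian_Hk]; exact neg_ne_zero.2 h0)
  rwa [wronskian_Hk, ZIcount_neg, ZIcount_mul h0, ZIcount_eq_zero hf, zero_add] at h

/-- The second-order condition: at a zero of `auxT κ f` one has `(1 - κ) S₁² = κ S₂`, hence
`S₂ > S₁²`, and `S₁ · (auxT κ f)'` is a positive multiple of `S₁ S₃ - S₂² < 0`. -/
theorem auxT_sign {f : ℝ[X]} (hs : f.Splits) (hd : f.natDegree ≠ 0) {κ : ℝ} (hκ0 : 0 ≤ κ)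
    (hκ : κ < 1 / 2) {x : ℝ} (hx : f.eval x ≠ 0) (hx' : (derivative f).eval x ≠ 0)
    (hT : (auxT κ f).eval x = 0) :
    (f * derivative f).eval x * (derivative (auxT κ f)).eval x < 0 := by
  obtain ⟨S₁, S₂, S₃, h1, h2, h3, hS2, hS3, -⟩ := power_sums hs hd hx
  simp only [auxT, derivative_add, derivative_mul, derivative_C, derivative_pow, eval_add,
    eval_mul, eval_C, eval_pow, h1, h2, h3, eval_zero] at hT ⊢
  simp only [h1, ne_eq, mul_eq_zero, not_or] at hx'
  have hS1 := hx'.2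
  set F := f.eval x
  have hF : 0 < F ^ 2 := by positivity
  have hT' : (1 - κ) * S₁ ^ 2 = κ * S₂ := by
    have : F ^ 2 * ((1 - κ) * S₁ ^ 2 - κ * S₂) = 0 := by linear_combination hT
    linarith [(mul_eq_zero.1 this).resolve_left hF.ne']
  have hS1' : 0 < S₁ ^ 2 := by positivity
  have hκpos : 0 < κ := by
    rcases hκ0.eq_or_lt with rfl | h
    · nlinarith
    · exact h
  have hlt : S₁ ^ 2 < S₂ := by
    by_contra! hc
    nlinarith
  -- as `S₁² < S₂` and `S₃² ≤ S₂³`, `(S₁ S₃)² < S₂⁴`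
  have hkey : S₁ * S₃ < S₂ ^ 2 := by
    by_contra! hc
    have h4 : (S₂ ^ 2) ^ 2 ≤ (S₁ * S₃) ^ 2 := pow_le_pow_left₀ (by positivity) hc 2
    have h5 : S₁ ^ 2 * S₃ ^ 2 ≤ S₁ ^ 2 * S₂ ^ 3 := mul_le_mul_of_nonneg_left hS3 hS1'.le
    have h6 : S₁ ^ 2 * S₂ ^ 3 < S₂ * S₂ ^ 3 := mul_lt_mul_of_pos_right hlt (by positivity)
    nlinarith
  have hF4 : 0 < F ^ 2 * F ^ 2 := by positivity
  have : F ^ 2 * F ^ 2 * (2 * (κ * (S₁ * S₃ - S₂ ^ 2))) < 0 :=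
    mul_neg_of_pos_of_neg hF4 (by nlinarith)
  refine lt_of_eq_of_lt ?_ this
  simp [-eval_mul]
  linear_combination (F^4 * (2*S₁^2 - 2 * S₂)) * hT'

theorem Hk_count_le_two_aux {J : Set ℝ} (hJ : J.OrdConnected) {p : ℝ[X]} {κ : ℝ}
    (hs : (derivative p).Splits) (hd : (derivative p).natDegree ≠ 0) (hκ0 : 0 ≤ κ)
    (hκ : κ < 1 / 2) (hf : ∀ x ∈ J, (derivative p).eval x ≠ 0)
    (hf' : ∀ x ∈ J, (derivative (derivative p)).eval x ≠ 0) :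
    ZIcount J (Hk κ p) ≤ 2 := by
  rcases J.eq_empty_or_nonempty with rfl | ⟨x, hx⟩
  · rw [ZIcount_eq_zero (by simp)]; omega
  have hT : auxT κ (derivative p) ≠ 0 := by
    intro h
    have := auxT_sign hs hd hκ0 hκ (hf x hx) (hf' x hx) (by simp [h])
    simp [h] at this
  have h1 := Hk_count_le_aux hJ κ hf hf' hT
  have h2 : ZIcount J (auxT κ (derivative p)) ≤ 1 :=
    at_most_one hJ (e := derivative p * derivative (derivative p))
      (fun x hx => by rw [eval_mul]; exact mul_ne_zero (hf x hx) (hf' x hx))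
      (fun x hx h => auxT_sign hs hd hκ0 hκ (hf x hx) (hf' x hx) h)
  omega

/-- Beyond all zeros of `p'` one has `S₂ ≤ S₁²`, so `auxT κ p'` is positive and the quotient
`Hk κ p / p''` is monotone. -/
theorem Hk_count_le_one {J : Set ℝ} (hJ : J.OrdConnected) {p : ℝ[X]} {κ : ℝ}
    (hs : (derivative p).Splits) (hd : (derivative p).natDegree ≠ 0)
    (hκ : κ < 1 / 2)
    (hside : (∀ x ∈ J, ∀ r, (derivative p).eval r = 0 → r < x) ∨
      (∀ x ∈ J, ∀ r, (derivative p).eval r = 0 → x < r)) :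
    ZIcount J (Hk κ p) ≤ 1 := by
  rcases J.eq_empty_or_nonempty with rfl | ⟨x₀, hx₀⟩
  · rw [ZIcount_eq_zero (by simp)]; omega
  have hf : ∀ x ∈ J, (derivative p).eval x ≠ 0 := by
    intro x hx h
    rcases hside with hside | hside
    · exact lt_irrefl _ (hside x hx x h)
    · exact lt_irrefl _ (hside x hx x h)
  have key : ∀ x ∈ J, (derivative (derivative p)).eval x ≠ 0 ∧
      (auxT κ (derivative p)).eval x ≠ 0 := by
    intro x hx
    obtain ⟨S₁, S₂, S₃, h1, h2, -, hS2, -, hle⟩ := power_sums hs hd (hf x hx)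
    have hle := hle (hside.imp (fun h => h x hx) (fun h => h x hx))
    have hS1 : S₁ ≠ 0 := by rintro rfl; simp at hle; linarith
    refine ⟨by rw [h1]; exact mul_ne_zero (hf x hx) hS1, ?_⟩
    simp only [auxT, eval_add, eval_mul, eval_C, eval_pow, h1, h2]
    have hF := hf x hx
    set F := (derivative p).eval x
    have : 0 < F ^ 2 * ((1 - κ) * S₁ ^ 2 - κ * S₂) := by
      have : 0 < F ^ 2 := by positivity
      exact mul_pos this (by nlinarith)
    refine ne_of_gt (this.trans_eq ?_)
    ring
  have hT : auxT κ (derivative p) ≠ 0 := by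
    intro h
    exact (key x₀ hx₀).2 (by simp [h])
  have h1 := Hk_count_le_aux hJ κ hf (fun x hx => (key x hx).1) hT
  rwa [ZIcount_eq_zero (fun x hx => (key x hx).2), zero_add] at h1

/-- The Laguerre inequality: `f' / f` is strictly decreasing when `f` is real-rooted. -/
theorem laguerre {f : ℝ[X]} (hs : f.Splits) (hd : f.natDegree ≠ 0) {x : ℝ}
    (hx : f.eval x ≠ 0) :
    f.eval x * (derivative (derivative f)).eval x < (derivative f).eval x ^ 2 := by
  obtain ⟨S₁, S₂, S₃, h1, h2, -, hS2, -, -⟩ := power_sums hs hd hx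
  rw [h1, h2]
  have : 0 < f.eval x ^ 2 * S₂ := by positivity
  linarith

theorem count_p_le_one {I : Set ℝ} (hI : I.OrdConnected) {p : ℝ[X]} (hp : derivative p ≠ 0)
    (hf : ∀ x ∈ I, (derivative p).eval x ≠ 0) : ZIcount I p ≤ 1 := by
  have h := rolle_wronskian hI (u := 1) (q := p) (by simp) (by simpa using hp)
  simp only [derivative_one, zero_mul, sub_zero, one_mul] at h
  rwa [ZIcount_eq_zero hf] at h

/-- Removes from `Hk_count_le_two_aux` the assumption that `p''` has no zero. For `κ > 0` the zeros
of `p''` are not zeros of `Hk κ p`, and zeros of `Hk κ p` cannot lie on both sides: `p p'` would be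
positive where `p'' / p' > 0` (on the left) and negative where `p'' / p' < 0` (on the right), while
`p` is monotone. -/
theorem Hk_count_le_two {I : Set ℝ} (hI : I.OrdConnected) {p : ℝ[X]} {κ : ℝ}
    (hs : (derivative p).Splits) (hd : (derivative p).natDegree ≠ 0) (hκ0 : 0 ≤ κ)
    (hκ : κ < 1 / 2) (hH : Hk κ p ≠ 0) (hf : ∀ x ∈ I, (derivative p).eval x ≠ 0) :
    ZIcount I (Hk κ p) ≤ 2 := by
  have hp' : derivative p ≠ 0 := by intro h; simp [h] at hd
  rcases hκ0.eq_or_lt with rfl | hκpos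
  · have hE : Hk 0 p = -(p * derivative (derivative p)) := by simp [Hk]
    rw [hE] at hH ⊢
    rw [ZIcount_neg, ZIcount_mul (neg_ne_zero.1 hH)]
    have h1 := count_p_le_one hI hp' hf
    have h2 : ZIcount I (derivative (derivative p)) ≤ 1 := at_most_one hI hf (fun x hx h => by
      have := laguerre hs hd (hf x hx)
      rwa [h, zero_pow two_ne_zero] at this)
    omega
  -- `w = p'' / p'` decreases, so the sets where it is positive or negative are intervals
  set w : ℝ → ℝ := fun x => (derivative (derivative p)).eval x / (derivative p).eval x with hw
  have hanti : AntitoneOn w I := by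
    have hder : ∀ x ∈ I, HasDerivAt w
        (((derivative (derivative (derivative p))).eval x * (derivative p).eval x -
          (derivative (derivative p)).eval x * (derivative (derivative p)).eval x) /
          (derivative p).eval x ^ 2) x := fun x hx =>
      ((derivative (derivative p)).hasDerivAt x).div ((derivative p).hasDerivAt x) (hf x hx)
    refine antitoneOn_of_deriv_nonpos hI.convex
      (fun x hx => (hder x hx).continuousAt.continuousWithinAt)
      (fun x hx => (hder x (interior_subset hx)).differentiableAt.differentiableWithinAt) ?_
    intro x hx
    have hx := interior_subset hx
    rw [(hder x hx).deriv]
    have := laguerre hs hd (hf x hx)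
    exact div_nonpos_of_nonpos_of_nonneg (by linarith) (sq_nonneg _)
  set J₁ : Set ℝ := {x | x ∈ I ∧ 0 < w x} with hJ₁
  set J₂ : Set ℝ := {x | x ∈ I ∧ w x < 0} with hJ₂
  have hJ₁c : J₁.OrdConnected := ⟨fun x hx y hy z hz => by
    have hzI := hI.out hx.1 hy.1 hz
    exact ⟨hzI, hy.2.trans_le (hanti hzI hy.1 hz.2)⟩⟩
  have hJ₂c : J₂.OrdConnected := ⟨fun x hx y hy z hz => by
    have hzI := hI.out hx.1 hy.1 hz
    exact ⟨hzI, (hanti hx.1 hzI hz.1).trans_lt hx.2⟩⟩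
  have hne : ∀ x, w x ≠ 0 → (derivative (derivative p)).eval x ≠ 0 := by
    intro x hx h
    simp [hw, h] at hx
  -- both are intervals without zeros of `p'` and `p''`
  have hb₁ : ZIcount J₁ (Hk κ p) ≤ 2 := Hk_count_le_two_aux hJ₁c hs hd hκ0 hκ
    (fun x hx => hf x hx.1) (fun x hx => hne x hx.2.ne')
  have hb₂ : ZIcount J₂ (Hk κ p) ≤ 2 := Hk_count_le_two_aux hJ₂c hs hd hκ0 hκ
    (fun x hx => hf x hx.1) (fun x hx => hne x hx.2.ne)
  have hroot : ∀ x ∈ I, (Hk κ p).eval x = 0 → 0 < p.eval x * (derivative p).eval x * w x := by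
    intro x hx h
    simp only [Hk, eval_sub, eval_mul, eval_pow, eval_C] at h
    have hF := hf x hx
    have : p.eval x * (derivative p).eval x * w x = κ * (derivative p).eval x ^ 2 := by
      rw [hw]; field_simp; linarith
    rw [this]
    positivity
  have hall : ∀ x ∈ I, (Hk κ p).eval x = 0 → x ∈ J₁ ∨ x ∈ J₂ := by
    intro x hx h
    have := right_ne_zero_of_mul (hroot x hx h).ne'
    rcases this.lt_or_gt with h | h
    · exact Or.inr ⟨hx, h⟩
    · exact Or.inl ⟨hx, h⟩
  by_cases h2 : ∃ y ∈ J₂, (Hk κ p).eval y = 0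
  · obtain ⟨y, hy, hy0⟩ := h2
    by_cases h1 : ∃ x ∈ J₁, (Hk κ p).eval x = 0
    · exfalso
      obtain ⟨x, hx, hx0⟩ := h1
      have hxy : x < y := by
        by_contra! hc
        have := hanti hy.1 hx.1 hc
        linarith [hx.2, hy.2]
      have hpx : 0 < p.eval x * (derivative p).eval x :=
        pos_of_mul_pos_left (hroot x hx.1 hx0) hx.2.le
      have hpy : p.eval y * (derivative p).eval y < 0 := by
        by_contra! hc
        nlinarith [hroot y hy.1 hy0, hy.2]
      obtain ⟨c, hc, hc0⟩ := exists_hasDerivAt_eq_slope (fun z => p.eval z)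
        (fun z => (derivative p).eval z) hxy p.continuous.continuousOn
        (fun z _ => p.hasDerivAt z)
      have hcI := hI.out hx.1 hy.1 (Set.Ioo_subset_Icc_self hc)
      have s1 := same_sign hI hf hx.1 hy.1
      have s2 := same_sign hI hf hx.1 hcI
      have hyx : 0 < y - x := sub_pos.2 hxy
      rw [eq_div_iff hyx.ne'] at hc0
      have h3 : 0 < (derivative p).eval x * (p.eval y - p.eval x) := by
        rw [← hc0]; nlinarith [mul_pos s2 hyx]
      have h4 : 0 < (derivative p).eval x * p.eval y := by nlinarith
      have h5 := mul_pos h4 s1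
      have h6 : 0 < (derivative p).eval x ^ 2 := by have := hf x hx.1; positivity
      nlinarith [mul_neg_of_neg_of_pos hpy h6]
    · refine le_trans (ZIcount_le fun x hx h => ?_) hb₂
      exact (hall x hx h).resolve_left fun h' => h1 ⟨x, h', h⟩
  · refine le_trans (ZIcount_le fun x hx h => ?_) hb₁
    exact (hall x hx h).resolve_right fun h' => h2 ⟨x, h', h⟩

/-! ### Signs at the endpoints -/

theorem Hk_degree {p : ℝ[X]} {m : ℕ} (hp : p.natDegree = m + 2) {κ : ℝ} (hκ : κ < 1 / 2) :
    (Hk κ p).natDegree = 2 * (m + 1) ∧ (Hk κ p).leadingCoeff < 0 := by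
  have hlc : p.coeff (m + 2) ≠ 0 := by
    rw [← hp]; apply leadingCoeff_ne_zero.2; rintro rfl; simp at hp
  have d1 : (derivative p).natDegree ≤ m + 1 := (natDegree_derivative_le p).trans (by omega)
  have d2 : (derivative (derivative p)).natDegree ≤ m :=
    (natDegree_derivative_le _).trans (by omega)
  have hle : (Hk κ p).natDegree ≤ 2 * (m + 1) := by
    unfold Hk
    refine (natDegree_sub_le _ _).trans (max_le ?_ ?_)
    · refine (natDegree_C_mul_le _ _).trans (natDegree_pow_le.trans (by omega))
    · exact natDegree_mul_le.trans (by omega)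
  have hco : (Hk κ p).coeff (2 * (m + 1)) < 0 := by
    have e1 : ((derivative p) ^ 2).coeff (2 * (m + 1)) = (derivative p).coeff (m + 1) ^ 2 := by
      rw [sq, two_mul, coeff_mul_add_eq_of_natDegree_le d1 d1, sq]
    have e2 : (p * derivative (derivative p)).coeff (2 * (m + 1)) =
        p.coeff (m + 2) * (derivative (derivative p)).coeff m := by
      rw [show 2 * (m + 1) = (m + 2) + m by ring, coeff_mul_add_eq_of_natDegree_le hp.le d2]
    rw [Hk, coeff_sub, coeff_C_mul, e1, e2]
    simp only [coeff_derivative]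
    push_cast
    have hm : (0 : ℝ) ≤ m := Nat.cast_nonneg m
    set c := p.coeff (m + 1 + 1)
    have hc2 : 0 < c ^ 2 := by positivity
    -- `κ n² < n² / 2 ≤ n (n - 1)` with `n = m + 2`
    have : κ * (m + 1 + 1) ^ 2 - (m + 1) * (m + 2) < (0 : ℝ) := by
      have h1 := mul_lt_mul_of_pos_right hκ (show (0 : ℝ) < (m + 1 + 1) ^ 2 by positivity)
      nlinarith
    have := mul_neg_of_pos_of_neg hc2 this
    linarith
  have hd : (Hk κ p).natDegree = 2 * (m + 1) := natDegree_eq_of_le_of_coeff_ne_zero hle hco.ne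
  exact ⟨hd, by rwa [leadingCoeff, hd]⟩

theorem Hk_eval_critical {p : ℝ[X]} (κ : ℝ) {a : ℝ} (ha : (derivative p).eval a = 0) :
    (Hk κ p).eval a = -(p.eval a * (derivative (derivative p)).eval a) := by
  simp [Hk, ha]

/-- At consecutive simple roots the derivative has opposite signs. -/
theorem derivative_sign_Ioo {f : ℝ[X]} {a b : ℝ} (hab : a < b) (ha : f.eval a = 0)
    (hb : f.eval b = 0) (ha' : (derivative f).eval a ≠ 0) (hb' : (derivative f).eval b ≠ 0)
    (hf : ∀ x ∈ Set.Ioo a b, f.eval x ≠ 0) :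
    (derivative f).eval a * (derivative f).eval b < 0 := by
  obtain ⟨g₁, hg₁⟩ := dvd_iff_isRoot.2 ha
  have h1 : g₁.eval b = 0 := by
    rw [hg₁] at hb
    simpa [sub_ne_zero.2 hab.ne'] using hb
  obtain ⟨g, rfl⟩ := dvd_iff_isRoot.2 h1
  have ea : (derivative f).eval a = (a - b) * g.eval a := by rw [hg₁]; simp
  have eb : (derivative f).eval b = (b - a) * g.eval b := by rw [hg₁]; simp
  rw [ea] at ha' ⊢
  rw [eb] at hb' ⊢
  have hg := parity_Ioo hab g (right_ne_zero_of_mul ha') (right_ne_zero_of_mul hb')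
  rw [ZIcount_eq_zero, pow_zero, one_mul] at hg
  · have : 0 < (b - a) ^ 2 := pow_pos (sub_pos.2 hab) 2
    nlinarith
  · intro x hx h
    exact hf x hx (by rw [hg₁]; simp [h])

theorem odd_of_pow_neg {k : ℕ} (h : (-1 : ℝ) ^ k < 0) : Odd k := by
  rcases Nat.even_or_odd k with hk | hk
  · rw [hk.neg_one_pow] at h; linarith
  · exact hk

theorem even_of_pow_pos {k : ℕ} (h : 0 < (-1 : ℝ) ^ k) : Even k := by
  rcases Nat.even_or_odd k with hk | hk
  · exact hk
  · rw [hk.neg_one_pow] at h; linarith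

/-- At critical points `Hk κ p = -p p''`, and `p''` has opposite signs at consecutive ones. -/
theorem odd_count_Ioo {p : ℝ[X]} (κ : ℝ) {a b : ℝ} (hab : a < b)
    (ha : (derivative p).eval a = 0) (hb : (derivative p).eval b = 0)
    (ha' : (derivative (derivative p)).eval a ≠ 0) (hb' : (derivative (derivative p)).eval b ≠ 0)
    (hpa : p.eval a ≠ 0) (hpb : p.eval b ≠ 0)
    (hf : ∀ x ∈ Set.Ioo a b, (derivative p).eval x ≠ 0) :
    Odd (ZIcount (Set.Ioo a b) (Hk κ p) + ZIcount (Set.Ioo a b) p) := by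
  have h1 := parity_Ioo hab p hpa hpb
  have h2 := parity_Ioo hab (Hk κ p)
    (by rw [Hk_eval_critical κ ha]; exact neg_ne_zero.2 (mul_ne_zero hpa ha'))
    (by rw [Hk_eval_critical κ hb]; exact neg_ne_zero.2 (mul_ne_zero hpb hb'))
  rw [Hk_eval_critical κ ha, Hk_eval_critical κ hb] at h2
  have h3 := derivative_sign_Ioo hab ha hb ha' hb' hf
  apply odd_of_pow_neg
  rw [pow_add]
  have h4 : 0 < (p.eval a * p.eval b) ^ 2 := by positivity
  by_contra! hc
  have h5 := mul_pos h1 h2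
  have h6 := mul_nonneg (mul_nonneg hc h4.le) (neg_nonneg.2 h3.le)
  linarith

/-- At `a`, `Hk κ p = -p p''`; `p''(a)` has the sign of the leading coefficient of `p`, and
`Hk κ p` has negative leading coefficient. -/
theorem even_count_Ioi {p : ℝ[X]} {m : ℕ} (hp : p.natDegree = m + 2) {κ : ℝ} (hκ : κ < 1 / 2)
    {a : ℝ} (ha : (derivative p).eval a = 0)
    (ha' : (derivative (derivative p)).eval a ≠ 0) (hpa : p.eval a ≠ 0)
    (hf : ∀ x ∈ Set.Ioi a, (derivative p).eval x ≠ 0) :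
    Even (ZIcount (Set.Ioi a) (Hk κ p) + ZIcount (Set.Ioi a) p) := by
  obtain ⟨-, hH⟩ := Hk_degree hp hκ
  have h1 := parity_Ioi a p hpa
  have h2 := parity_Ioi a (Hk κ p)
    (by rw [Hk_eval_critical κ ha]; exact neg_ne_zero.2 (mul_ne_zero hpa ha'))
  obtain ⟨g, hg⟩ := dvd_iff_isRoot.2 ha
  have ea : (derivative (derivative p)).eval a = g.eval a := by rw [hg]; simp
  have hlc : g.leadingCoeff = p.leadingCoeff * (m + 2) := by
    rw [← one_mul g.leadingCoeff, ← leadingCoeff_X_sub_C a, ← leadingCoeff_mul, ← hg,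
      leadingCoeff_derivative, hp]
    push_cast; ring
  have h3 := parity_Ioi a g (by rwa [← ea])
  rw [ZIcount_eq_zero (fun x hx h => hf x hx (by rw [hg]; simp [h])), pow_zero, one_mul, ← ea,
    hlc] at h3
  rw [Hk_eval_critical κ ha] at h2
  apply even_of_pow_pos
  rw [pow_add]
  by_contra! hc
  have h4 := mul_pos (mul_pos h1 h2) h3
  have h5 : 0 < (p.eval a * (derivative (derivative p)).eval a * p.leadingCoeff) ^ 2 * (m + 2) *
      -(Hk κ p).leadingCoeff := by
    have : p.leadingCoeff ≠ 0 := by intro h; simp [h] at h1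
    have h6 := neg_pos.2 hH
    positivity
  nlinarith [mul_nonneg h5.le (neg_nonneg.2 hc)]

/-- Mirror image of `even_count_Ioi`: `p` and `p' / (X - a)` have degrees of the same parity, and
`Hk κ p` has even degree. -/
theorem even_count_Iio {p : ℝ[X]} {m : ℕ} (hp : p.natDegree = m + 2) {κ : ℝ} (hκ : κ < 1 / 2)
    {a : ℝ} (ha : (derivative p).eval a = 0)
    (ha' : (derivative (derivative p)).eval a ≠ 0) (hpa : p.eval a ≠ 0)
    (hf : ∀ x ∈ Set.Iio a, (derivative p).eval x ≠ 0) :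
    Even (ZIcount (Set.Iio a) (Hk κ p) + ZIcount (Set.Iio a) p) := by
  obtain ⟨hd, hH⟩ := Hk_degree hp hκ
  have h1 := parity_Iio a p hpa
  have h2 := parity_Iio a (Hk κ p)
    (by rw [Hk_eval_critical κ ha]; exact neg_ne_zero.2 (mul_ne_zero hpa ha'))
  obtain ⟨g, hg⟩ := dvd_iff_isRoot.2 ha
  have ea : (derivative (derivative p)).eval a = g.eval a := by rw [hg]; simp
  have hg0 : g ≠ 0 := by rintro rfl; simp at ea; exact ha' ea
  have hlc : g.leadingCoeff = p.leadingCoeff * (m + 2) := by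
    rw [← one_mul g.leadingCoeff, ← leadingCoeff_X_sub_C a, ← leadingCoeff_mul, ← hg,
      leadingCoeff_derivative, hp]
    push_cast; ring
  have hgd : g.natDegree = m := by
    have h := natDegree_mul (X_sub_C_ne_zero a) hg0
    rw [← hg, natDegree_X_sub_C, natDegree_derivative, hp] at h
    omega
  have h3 := parity_Iio a g (by rwa [← ea])
  rw [ZIcount_eq_zero (fun x hx h => hf x hx (by rw [hg]; simp [h])), pow_zero, one_mul, ← ea,
    hlc, hgd] at h3
  rw [Hk_eval_critical κ ha, hd, pow_mul, neg_one_sq, one_pow, one_mul] at h2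
  rw [hp, pow_add, neg_one_sq, mul_one] at h1
  apply even_of_pow_pos
  rw [pow_add]
  by_contra! hc
  have h4 := mul_pos (mul_pos h1 h2) h3
  have hsq : ((-1 : ℝ) ^ m) ^ 2 = 1 := by rw [← pow_mul, mul_comm, pow_mul, neg_one_sq, one_pow]
  have h5 : 0 < (p.eval a * (derivative (derivative p)).eval a * p.leadingCoeff) ^ 2 * (m + 2) *
      -(Hk κ p).leadingCoeff * ((-1 : ℝ) ^ m) ^ 2 := by
    have : p.leadingCoeff ≠ 0 := by intro h; simp [h] at h1
    have h6 := neg_pos.2 hH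
    positivity
  nlinarith [mul_nonneg h5.le (neg_nonneg.2 hc)]

/-- `p'` has degree `n - 1` and the `n - 1` distinct roots `ξ k`, so they are all simple and `p'`
splits. -/
theorem derivative_roots_of_enumeration {n : ℕ} (hn : 2 ≤ n) {p : ℝ[X]} (hdeg : p.natDegree = n)
    {ξ : ℕ → ℝ} (hmono : ∀ i j, 1 ≤ i → i < j → j ≤ n - 1 → ξ i < ξ j)
    (hroot : ∀ k, 1 ≤ k → k ≤ n - 1 → (derivative p).IsRoot (ξ k)) :
    (derivative p).Splits ∧ (derivative p).roots.Nodup := by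
  classical
  have hd : (derivative p).natDegree = n - 1 := by rw [natDegree_derivative, hdeg]
  have h0 : derivative p ≠ 0 := by
    intro h; rw [h, natDegree_zero] at hd; omega
  have hsub : (Finset.Icc 1 (n - 1)).image ξ ⊆ (derivative p).roots.toFinset := by
    intro x hx
    obtain ⟨k, hk, rfl⟩ := Finset.mem_image.1 hx
    rw [Finset.mem_Icc] at hk
    rw [Multiset.mem_toFinset, mem_roots h0]
    exact hroot k hk.1 hk.2
  have hcard : ((Finset.Icc 1 (n - 1)).image ξ).card = n - 1 := by
    rw [Finset.card_image_of_injOn, Nat.card_Icc]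
    · omega
    · intro i hi j hj hij
      rw [Finset.coe_Icc] at hi hj
      rcases lt_trichotomy i j with h | h | h
      · exact absurd hij (hmono i j hi.1 h hj.2).ne
      · exact h
      · exact absurd hij (hmono j i hj.1 h hi.2).ne'
  have h1 := Finset.card_le_card hsub
  have h2 := Multiset.toFinset_card_le (derivative p).roots
  have h3 := card_roots' (derivative p)
  refine ⟨splits_iff_card_roots.2 (by omega), ?_⟩
  exact Multiset.toFinset_card_eq_card_iff_nodup.1 (by omega)

theorem stmt15 (n : ℕ) (hn : 2 ≤ n) (p : ℝ[X]) (hdeg : p.natDegree = n)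
    (hsimple : ∀ x : ℝ, p.IsRoot x → rootMultiplicity x p = 1)
    (ξ : ℕ → ℝ)
    (hmono : ∀ i j, 1 ≤ i → i < j → j ≤ n - 1 → ξ i < ξ j)
    (hroot : ∀ k, 1 ≤ k → k ≤ n - 1 → (derivative p).IsRoot (ξ k))
    (hall : ∀ x : ℝ, (derivative p).IsRoot x → ∃ k, 1 ≤ k ∧ k ≤ n - 1 ∧ x = ξ k)
    (κ : ℝ) (hκ0 : 0 ≤ κ) (hκ : κ < 1 / 2) :
    (∀ k, 2 ≤ k → k ≤ n - 1 →
      (∀ x ∈ Set.Ioo (ξ (k - 1)) (ξ k), ¬ p.IsRoot x) →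
      ZIcount (Set.Ioo (ξ (k - 1)) (ξ k)) (Hk κ p) = 1) ∧
    (∀ k, 2 ≤ k → k ≤ n - 1 →
      (∃ x ∈ Set.Ioo (ξ (k - 1)) (ξ k), p.IsRoot x) →
      ZIcount (Set.Ioo (ξ (k - 1)) (ξ k)) (Hk κ p) = 0 ∨
        ZIcount (Set.Ioo (ξ (k - 1)) (ξ k)) (Hk κ p) = 2) ∧
    ((∀ x ∈ Set.Iio (ξ 1), ¬ p.IsRoot x) → ZIcount (Set.Iio (ξ 1)) (Hk κ p) = 0) ∧
    ((∀ x ∈ Set.Ioi (ξ (n - 1)), ¬ p.IsRoot x) →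
      ZIcount (Set.Ioi (ξ (n - 1))) (Hk κ p) = 0) ∧
    ((∃ x ∈ Set.Iio (ξ 1), p.IsRoot x) → ZIcount (Set.Iio (ξ 1)) (Hk κ p) = 1) ∧
    ((∃ x ∈ Set.Ioi (ξ (n - 1)), p.IsRoot x) →
      ZIcount (Set.Ioi (ξ (n - 1))) (Hk κ p) = 1) := by
  obtain ⟨m, rfl⟩ : ∃ m, n = m + 2 := ⟨n - 2, by omega⟩
  obtain ⟨hs, hnd⟩ := derivative_roots_of_enumeration hn hdeg hmono hroot
  have hd : (derivative p).natDegree ≠ 0 := by rw [natDegree_derivative, hdeg]; omega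
  have hp' : derivative p ≠ 0 := by intro h; simp [h] at hd
  have hp : p ≠ 0 := by rintro rfl; simp at hp'
  have hH : Hk κ p ≠ 0 := by
    rw [← leadingCoeff_ne_zero]; exact (Hk_degree hdeg hκ).2.ne
  have hpξ : ∀ a, (derivative p).eval a = 0 → p.eval a ≠ 0 := by
    intro a ha h
    have := (one_lt_rootMultiplicity_iff_isRoot hp).2 ⟨h, ha⟩
    have := hsimple a h
    omega
  have hfξ : ∀ a, (derivative p).eval a = 0 → (derivative (derivative p)).eval a ≠ 0 := by
    intro a ha h
    have h1 := (one_lt_rootMultiplicity_iff_isRoot hp').2 ⟨ha, h⟩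
    have h2 := Multiset.nodup_iff_count_le_one.1 hnd a
    rw [count_roots] at h2
    omega
  have hle : ∀ i j, 1 ≤ i → i ≤ j → j ≤ m + 2 - 1 → ξ i ≤ ξ j := by
    intro i j hi hij hj
    rcases hij.eq_or_lt with rfl | h
    · exact le_rfl
    · exact (hmono i j hi h hj).le
  have hzero : ∀ I : Set ℝ, (∀ x ∈ I, ¬ p.IsRoot x) → ZIcount I p = 0 := fun I h =>
    ZIcount_eq_zero h
  have hpos : ∀ I : Set ℝ, (∃ x ∈ I, p.IsRoot x) → 0 < ZIcount I p := by
    rintro I ⟨x, hx, h⟩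
    exact ZIcount_pos hp hx h
  have bounded : ∀ k, 2 ≤ k → k ≤ m + 2 - 1 →
      Odd (ZIcount (Set.Ioo (ξ (k - 1)) (ξ k)) (Hk κ p) +
        ZIcount (Set.Ioo (ξ (k - 1)) (ξ k)) p) ∧
      ZIcount (Set.Ioo (ξ (k - 1)) (ξ k)) (Hk κ p) ≤ 2 ∧
      ZIcount (Set.Ioo (ξ (k - 1)) (ξ k)) p ≤ 1 := by
    intro k hk hkn
    have hf : ∀ x ∈ Set.Ioo (ξ (k - 1)) (ξ k), (derivative p).eval x ≠ 0 := by
      intro x hx h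
      obtain ⟨j, hj1, hj2, rfl⟩ := hall x h
      rcases Nat.lt_or_ge j k with hjk | hjk
      · exact absurd (hle j (k - 1) hj1 (by omega) (by omega)) (not_le.2 hx.1)
      · exact absurd (hle k j (by omega) hjk hj2) (not_le.2 hx.2)
    have ha := hroot (k - 1) (by omega) (by omega)
    have hb := hroot k (by omega) hkn
    exact ⟨odd_count_Ioo κ (hmono (k - 1) k (by omega) (by omega) hkn) ha hb (hfξ _ ha)
      (hfξ _ hb) (hpξ _ ha) (hpξ _ hb) hf,
      Hk_count_le_two Set.ordConnected_Ioo hs hd hκ0 hκ hH hf,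
      count_p_le_one Set.ordConnected_Ioo hp' hf⟩
  have left : ZIcount (Set.Iio (ξ 1)) (Hk κ p) = ZIcount (Set.Iio (ξ 1)) p ∧
      ZIcount (Set.Iio (ξ 1)) p ≤ 1 := by
    have hside : ∀ x ∈ Set.Iio (ξ 1), ∀ r, (derivative p).eval r = 0 → x < r := by
      intro x hx r hr
      obtain ⟨j, hj1, hj2, rfl⟩ := hall r hr
      exact (Set.mem_Iio.1 hx).trans_le (hle 1 j le_rfl hj1 hj2)
    have hf : ∀ x ∈ Set.Iio (ξ 1), (derivative p).eval x ≠ 0 := fun x hx h =>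
      lt_irrefl _ (hside x hx x h)
    have ha := hroot 1 le_rfl (by omega)
    have h1 := even_count_Iio hdeg hκ ha (hfξ _ ha) (hpξ _ ha) hf
    have h2 := Hk_count_le_one Set.ordConnected_Iio hs hd hκ (Or.inr hside)
    have h3 := count_p_le_one Set.ordConnected_Iio hp' hf
    rw [Nat.even_iff] at h1
    omega
  have right : ZIcount (Set.Ioi (ξ (m + 2 - 1))) (Hk κ p) = ZIcount (Set.Ioi (ξ (m + 2 - 1))) p ∧
      ZIcount (Set.Ioi (ξ (m + 2 - 1))) p ≤ 1 := by
    have hside : ∀ x ∈ Set.Ioi (ξ (m + 2 - 1)), ∀ r, (derivative p).eval r = 0 → r < x := by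
      intro x hx r hr
      obtain ⟨j, hj1, hj2, rfl⟩ := hall r hr
      exact (hle j (m + 2 - 1) hj1 hj2 le_rfl).trans_lt (Set.mem_Ioi.1 hx)
    have hf : ∀ x ∈ Set.Ioi (ξ (m + 2 - 1)), (derivative p).eval x ≠ 0 := fun x hx h =>
      lt_irrefl _ (hside x hx x h)
    have ha := hroot (m + 2 - 1) (by omega) le_rfl
    have h1 := even_count_Ioi hdeg hκ ha (hfξ _ ha) (hpξ _ ha) hf
    have h2 := Hk_count_le_one Set.ordConnected_Ioi hs hd hκ (Or.inl hside)
    have h3 := count_p_le_one Set.ordConnected_Ioi hp' hf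
    rw [Nat.even_iff] at h1
    omega
  refine ⟨fun k hk hkn h => ?_, fun k hk hkn h => ?_, fun h => ?_, fun h => ?_, fun h => ?_,
    fun h => ?_⟩
  · obtain ⟨h1, h2, h3⟩ := bounded k hk hkn
    have := hzero _ h
    rw [Nat.odd_iff] at h1
    omega
  · obtain ⟨h1, h2, h3⟩ := bounded k hk hkn
    have := hpos _ h
    rw [Nat.odd_iff] at h1
    omega
  · have := hzero _ h
    omega
  · have := hzero _ h
    omega
  · have := hpos _ h
    omega
  · have := hpos _ h
    omega
end

section
/- Let n ≥ 2, let p be a real polynomial of degree n such that every real zero of p is simple and p′ has n − 1 distinct real zeros ξ₁ < ⋯ < ξ_{n−1}, and let 0 ≤ κ < (n−1)/n. If the unbounded interval (−∞, ξ₁) contains a zero of p, then H_κ[p] has exactly one root (counted with multiplicity) in (−∞, ξ₁); likewise, if (ξ_{n−1}, ∞) contains a zero of p, then H_κ[p] has exactly one root (counted with multiplicity) in (ξ_{n−1}, ∞). -/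
/-!
By the reflection `x ↦ -x` and the sign change `p ↦ -p`, it suffices to treat `(b, ∞)` with
`b = ξ_{n-1}` and a positive leading coefficient. Put `q = p'`; it is real-rooted with all roots
at most `b`, so `q, q' > 0` on `(b, ∞)`, and `p` increases there through its zero `c`.

On `(b, c)` one has `H_κ[p] = κ q² - p q' > 0`. On `[c, ∞)` the zeros of `H_κ[p]` are the
solutions of `g = κ` with `g = p q' / q²`. The function `g` vanishes at `c` and tends to
`(n-1)/n > κ` at infinity, so a solution exists. It is unique and simple because `g' > 0` on
`[c, ∞)`. Indeed, with `u = q'/q`, the condition `g' > 0` says that `p < R`, where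
`R = u q / (u² - u')`. This holds at `c`, where `p = 0 < R`, and `(R - p)' ≥ 0` is equivalent to
`u u'' ≥ 2 u'²`. Writing `u = ∑ (x - ξ_k)⁻¹`, the latter is the Cauchy–Schwarz inequality
`(∑ (x - ξ_k)⁻²)² ≤ (∑ (x - ξ_k)⁻¹) (∑ (x - ξ_k)⁻³)`.

The Cauchy–Schwarz step is `power_sums`, its consequences for `q` are `real_rooted_ineqs`, and the
monotonicity argument is `analytic_core`.
-/

open Polynomial

/-! ### Real-rooted polynomials to the right of all their roots -/

/-- With `s₁, s₂, s₃` the power sums `∑ (x - r)⁻ᵏ` (`k = 1, 2, 3`) over the roots of the monic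
polynomial `q = ∏ (X - r)`, Newton's identities express `q', q'', q'''` at `x` as `q` times a
polynomial in the `sₖ`, and Cauchy–Schwarz gives `s₂² ≤ s₁ s₃` when `x` exceeds every root. -/
lemma power_sums_s17 (x : ℝ) (s : Multiset ℝ) (hs : ∀ r ∈ s, r < x) :
    0 < ((s.map fun r => X - C r).prod).eval x ∧
    ∃ s₁ s₂ s₃ : ℝ, 0 ≤ s₁ ∧ (s ≠ 0 → 0 < s₁) ∧ 0 ≤ s₂ ∧ 0 ≤ s₃ ∧ s₂ ^ 2 ≤ s₁ * s₃ ∧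
      (derivative (s.map fun r => X - C r).prod).eval x =
        ((s.map fun r => X - C r).prod).eval x * s₁ ∧
      (derivative (derivative (s.map fun r => X - C r).prod)).eval x =
        ((s.map fun r => X - C r).prod).eval x * (s₁ ^ 2 - s₂) ∧
      (derivative (derivative (derivative (s.map fun r => X - C r).prod))).eval x =
        ((s.map fun r => X - C r).prod).eval x * (s₁ ^ 3 - 3 * s₁ * s₂ + 2 * s₃) := by
  induction s using Multiset.induction_on with
  | empty => exact ⟨by simp, 0, 0, 0, by simp⟩
  | cons r s ih =>
    obtain ⟨hq, s₁, s₂, s₃, h1, -, h2, h3, hcs, e1, e2, e3⟩ :=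
      ih fun a ha => hs a (Multiset.mem_cons_of_mem ha)
    have hr : 0 < x - r := sub_pos.mpr (hs r (Multiset.mem_cons_self r s))
    obtain ⟨t, ht⟩ : ∃ t, t = (x - r)⁻¹ := ⟨_, rfl⟩
    have ht0 : 0 < t := by rw [ht]; positivity
    have hxt : (x - r) * t = 1 := by rw [ht]; exact mul_inv_cancel₀ hr.ne'
    simp only [Multiset.map_cons, Multiset.prod_cons]
    generalize (s.map fun r => X - C r).prod = q at *
    refine ⟨by simpa using mul_pos hr hq, s₁ + t, s₂ + t ^ 2, s₃ + t ^ 3, by positivity,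
      fun _ => by positivity, by positivity, by positivity, ?_, ?_, ?_, ?_⟩
    · -- AM-GM: `(2 s₂ t)² ≤ 4 (s₁ t²) s₃ ≤ (s₁ t² + s₃)²`
      have key : 2 * s₂ * t ≤ s₁ * t ^ 2 + s₃ := by
        refine (le_abs_self _).trans (abs_le_of_sq_le_sq ?_ (by positivity))
        nlinarith [sq_nonneg (s₁ * t ^ 2 - s₃), mul_le_mul_of_nonneg_right hcs (sq_nonneg t)]
      nlinarith [mul_le_mul_of_nonneg_right key ht0.le]
    · simp [e1]
      linear_combination (-eval x q) * hxt
    · simp [e1, e2]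
      linear_combination (-2 * eval x q * s₁) * hxt
    · simp [e2, e3]
      linear_combination (-3 * eval x q * (s₁ ^ 2 - s₂)) * hxt

/-- The positivity facts about a real-rooted `q` used below. In terms of `u = q'/q` the last two
expressions are `q² (u² - u')` and `q³ (u u'' - 2 u'²)`. -/
lemma real_rooted_ineqs (q : ℝ[X]) (S : Finset ℝ) (hS : ∀ r ∈ S, q.IsRoot r)
    (hcard : S.card = q.natDegree) (hdeg : 0 < q.natDegree) (hlc : 0 < q.leadingCoeff)
    (x : ℝ) (hx : ∀ r ∈ S, r < x) :
    0 < q.eval x ∧ 0 < (derivative q).eval x ∧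
    0 < 2 * (derivative q).eval x ^ 2 - q.eval x * (derivative (derivative q)).eval x ∧
    0 ≤ q.eval x * (derivative q).eval x * (derivative (derivative (derivative q))).eval x
      + (derivative q).eval x ^ 2 * (derivative (derivative q)).eval x
      - 2 * q.eval x * (derivative (derivative q)).eval x ^ 2 := by
  have hq0 : q ≠ 0 := by rintro rfl; simp at hdeg
  have hle : S.val ≤ q.roots :=
    Finset.val_le_iff_val_subset.mpr fun r hr => (mem_roots hq0).2 (hS r hr)
  have hroots : S.val = q.roots :=
    Multiset.eq_of_le_of_card_le hle (by
      have := q.card_roots'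
      have h : Multiset.card S.val = S.card := rfl
      omega)
  have hprod : C q.leadingCoeff * (S.val.map fun r => X - C r).prod = q := by
    rw [hroots]
    exact C_leadingCoeff_mul_prod_multiset_X_sub_C (by rw [← hroots]; exact hcard)
  have hne : S.val ≠ 0 := by
    intro h
    have : S.card = 0 := by rw [Finset.card_def, h]; rfl
    omega
  obtain ⟨hm, s₁, s₂, s₃, -, h1, h2, h3, hcs, e1, e2, e3⟩ := power_sums_s17 x S.val hx
  replace h1 := h1 hne
  clear hroots hle hq0 hdeg hcard hS
  generalize q.leadingCoeff = a at *
  generalize (S.val.map fun r => X - C r).prod = m at *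
  subst hprod
  simp only [derivative_C_mul, eval_mul, eval_C, e1, e2, e3]
  generalize eval x m = y at *
  have hp : 0 < a * y := mul_pos hlc hm
  refine ⟨hp, by rw [← mul_assoc]; positivity, ?_, ?_⟩
  · have : 0 < (a * y) ^ 2 * (s₁ ^ 2 + s₂) := by positivity
    linarith
  · have : 0 ≤ 2 * (a * y) ^ 3 * (s₁ * s₃ - s₂ ^ 2) :=
      mul_nonneg (by positivity) (sub_nonneg.2 hcs)
    linarith

/-! ### Monotonicity of `p p'' / (p')²` -/

/-- The calculus part of the argument, for functions `P, q, q₁, q₂, q₃` each of which is the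
derivative of the preceding one (`P` plays the role of `p`). The quotient `P q₁ / q²` is strictly
increasing on `[c, ∞)`, so it takes the value `κ` exactly once there, while
`κ q² - P q₁ > 0` on `(b, c)`. -/
lemma analytic_core (P q q₁ q₂ q₃ : ℝ → ℝ) (D0 : ∀ x, HasDerivAt P (q x) x)
    (D1 : ∀ x, HasDerivAt q (q₁ x) x) (D2 : ∀ x, HasDerivAt q₁ (q₂ x) x)
    (D3 : ∀ x, HasDerivAt q₂ (q₃ x) x) (b c L κ : ℝ) (hbc : b < c) (hc : P c = 0)
    (facts : ∀ x, b < x → 0 < q x ∧ 0 < q₁ x ∧ 0 < 2 * q₁ x ^ 2 - q x * q₂ x ∧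
      0 ≤ q x * q₁ x * q₃ x + q₁ x ^ 2 * q₂ x - 2 * q x * q₂ x ^ 2)
    (hlim : Filter.Tendsto (fun x => P x * q₁ x / q x ^ 2) Filter.atTop (nhds L))
    (hκ0 : 0 ≤ κ) (hκ : κ < L) :
    ∃ x₀, b < x₀ ∧ κ * q x₀ ^ 2 - P x₀ * q₁ x₀ = 0 ∧
      2 * κ * q x₀ * q₁ x₀ - q x₀ * q₁ x₀ - P x₀ * q₂ x₀ ≠ 0 ∧
      ∀ y, b < y → κ * q y ^ 2 - P y * q₁ y = 0 → y = x₀ := by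
  have hPmono : StrictMonoOn P (Set.Ioi b) :=
    strictMonoOn_of_deriv_pos (convex_Ioi b)
      (fun x _ => (D0 x).continuousAt.continuousWithinAt) (fun x hx => by
        rw [interior_Ioi] at hx
        rw [(D0 x).deriv]; exact (facts x hx).1)
  -- The derivative of `P q₁ / q²` is `(q₁ q² - P (2 q₁² - q q₂)) / q³`; its numerator is positive
  -- on `[c, ∞)` because the difference `R - P` below is nondecreasing and positive at `c`.
  have hR : ∀ x, b < x → HasDerivAt
      (fun x => q₁ x * q x ^ 2 / (2 * q₁ x ^ 2 - q x * q₂ x) - P x)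
      (q x ^ 2 * (q x * q₁ x * q₃ x + q₁ x ^ 2 * q₂ x - 2 * q x * q₂ x ^ 2) /
        (2 * q₁ x ^ 2 - q x * q₂ x) ^ 2) x := by
    intro x hx
    have hD := (facts x hx).2.2.1
    refine ((((D2 x).mul ((D1 x).pow 2)).div ((((D2 x).pow 2).const_mul 2).sub
      ((D1 x).mul (D3 x))) hD.ne').sub (D0 x)).congr_deriv ?_
    simp only [Pi.mul_apply, Pi.sub_apply, Pi.pow_apply]
    have h2 := pow_ne_zero 2 hD.ne'
    rw [div_sub' h2, div_left_inj' h2]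
    push_cast
    ring
  have hRmono : MonotoneOn (fun x => q₁ x * q x ^ 2 / (2 * q₁ x ^ 2 - q x * q₂ x) - P x)
      (Set.Ici c) := by
    refine monotoneOn_of_deriv_nonneg (convex_Ici c)
      (fun x hx => (hR x (hbc.trans_le hx)).continuousAt.continuousWithinAt)
      (fun x hx => (hR x (hbc.trans_le
        (interior_subset hx))).differentiableAt.differentiableWithinAt)
      (fun x hx => ?_)
    have hx' : b < x := hbc.trans_le (interior_subset hx)
    rw [(hR x hx').deriv]
    have := (facts x hx').2.2.2
    positivity
  have hW : ∀ x, c ≤ x → 0 < q₁ x * q x ^ 2 - P x * (2 * q₁ x ^ 2 - q x * q₂ x) := by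
    intro x hx
    have h := hRmono (Set.mem_Ici.2 le_rfl) (Set.mem_Ici.2 hx) hx
    simp only [hc, sub_zero] at h
    obtain ⟨f1, f2, f3, -⟩ := facts c hbc
    obtain ⟨-, -, g3, -⟩ := facts x (hbc.trans_le hx)
    have h0 : 0 < q₁ x * q x ^ 2 / (2 * q₁ x ^ 2 - q x * q₂ x) - P x :=
      lt_of_lt_of_le (by positivity) h
    rw [sub_pos, lt_div_iff₀ g3] at h0
    linarith
  have hg : ∀ x, b < x → HasDerivAt (fun x => P x * q₁ x / q x ^ 2)
      ((q₁ x * q x ^ 2 - P x * (2 * q₁ x ^ 2 - q x * q₂ x)) / q x ^ 3) x := by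
    intro x hx
    have hq := (facts x hx).1.ne'
    refine (((D0 x).mul (D2 x)).div ((D1 x).pow 2) (pow_ne_zero 2 hq)).congr_deriv ?_
    simp only [Pi.mul_apply, Pi.pow_apply]
    field_simp
    ring
  have hgcont : ContinuousOn (fun x => P x * q₁ x / q x ^ 2) (Set.Ici c) :=
    fun x hx => (hg x (hbc.trans_le hx)).continuousAt.continuousWithinAt
  have hgmono : StrictMonoOn (fun x => P x * q₁ x / q x ^ 2) (Set.Ici c) := by
    refine strictMonoOn_of_deriv_pos (convex_Ici c) hgcont (fun x hx => ?_)
    have hx' : c ≤ x := interior_subset hx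
    rw [(hg x (hbc.trans_le hx')).deriv]
    exact div_pos (hW x hx') (pow_pos (facts x (hbc.trans_le hx')).1 3)
  have hiff : ∀ x, b < x →
      (κ * q x ^ 2 - P x * q₁ x = 0 ↔ P x * q₁ x / q x ^ 2 = κ) := by
    intro x hx
    have := (facts x hx).1.ne'
    rw [div_eq_iff (pow_ne_zero 2 this), sub_eq_zero, eq_comm]
  obtain ⟨d, hd1, hd2⟩ :=
    ((hlim.eventually (lt_mem_nhds hκ)).and (Filter.eventually_ge_atTop c)).exists
  obtain ⟨x₀, ⟨hx0, -⟩, hx0'⟩ := intermediate_value_Icc hd2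
    (hgcont.mono Set.Icc_subset_Ici_self)
    (show κ ∈ Set.Icc _ _ from ⟨by simpa [hc] using hκ0, hd1.le⟩)
  have hbx := hbc.trans_le hx0
  refine ⟨x₀, hbx, (hiff _ hbx).2 hx0', fun h => ?_, fun y hy hy0 => ?_⟩
  · have e := (hiff _ hbx).2 hx0'
    have w := hW x₀ hx0
    have : q₁ x₀ * q x₀ ^ 2 - P x₀ * (2 * q₁ x₀ ^ 2 - q x₀ * q₂ x₀) = 0 := by
      linear_combination 2 * q₁ x₀ * e - q x₀ * h
    exact w.ne' this
  · rcases lt_or_ge y c with hyc | hyc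
    · exfalso
      have hP : P y < 0 := hc ▸ hPmono hy hbc hyc
      obtain ⟨f1, f2, -⟩ := facts y hy
      have := mul_neg_of_neg_of_pos hP f2
      have : 0 ≤ κ * q y ^ 2 := by positivity
      linarith
    · exact hgmono.injOn hyc hx0 (((hiff y hy).1 hy0).trans hx0'.symm)

/-! ### The unique simple root of `H_κ[p]` -/

/-- The right-hand interval, for a positive leading coefficient. The hypothesis on `κ` enters
through the limit `(n - 1) / n` of `p p'' / (p')²` at infinity. -/
lemma unique_simple_root_of_pos (n : ℕ) (hn : 2 ≤ n) (p : ℝ[X]) (hdeg : p.natDegree = n)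
    (hlc : 0 < p.leadingCoeff) (S : Finset ℝ) (hS : ∀ r ∈ S, (derivative p).IsRoot r)
    (hcard : S.card = n - 1) (b : ℝ) (hb : ∀ r ∈ S, r ≤ b) (c : ℝ) (hbc : b < c)
    (hc : p.IsRoot c) (κ : ℝ) (hκ0 : 0 ≤ κ) (hκ : κ < ((n : ℝ) - 1) / n) :
    ∃ x₀, b < x₀ ∧ (Hk κ p).IsRoot x₀ ∧ (derivative (Hk κ p)).eval x₀ ≠ 0 ∧
      ∀ y, b < y → (Hk κ p).IsRoot y → y = x₀ := by
  have hn0 : (0 : ℝ) < n := by exact_mod_cast (by omega : 0 < n)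
  have hn1 : (0 : ℝ) < (n : ℝ) - 1 := by
    have : (2 : ℝ) ≤ n := by exact_mod_cast hn
    linarith
  have hd1 : (derivative p).natDegree = n - 1 := by rw [natDegree_derivative, hdeg]
  have hd2 : (derivative (derivative p)).natDegree = n - 1 - 1 := by
    rw [natDegree_derivative, hd1]
  have hl1 : (derivative p).leadingCoeff = p.leadingCoeff * n := by
    rw [leadingCoeff, hd1, coeff_derivative, leadingCoeff, hdeg]
    have : n - 1 + 1 = n := by omega
    rw [this]; congr 1; exact_mod_cast this
  have hl2 : (derivative (derivative p)).leadingCoeff = p.leadingCoeff * n * (n - 1) := by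
    rw [leadingCoeff, hd2, coeff_derivative, ← hl1, leadingCoeff, hd1]
    have : n - 1 - 1 + 1 = n - 1 := by omega
    rw [this]; congr 1
    have h2 : ((n - 1 - 1 + 1 : ℕ) : ℝ) = ((n - 1 : ℕ) : ℝ) := by rw [this]
    rw [Nat.cast_add, Nat.cast_one, Nat.cast_sub (by omega : 1 ≤ n), Nat.cast_one] at h2
    exact h2
  have hl1pos : 0 < (derivative p).leadingCoeff := by rw [hl1]; positivity
  have facts := fun x (hx : b < x) =>
    real_rooted_ineqs (derivative p) S hS (by rw [hcard, hd1]) (by omega) hl1pos x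
      (fun r hr => (hb r hr).trans_lt hx)
  have hp0 : p ≠ 0 := by rintro rfl; simp at hlc
  have hq0 : derivative p ≠ 0 := by intro h; simp [h] at hl1pos
  have hr0 : derivative (derivative p) ≠ 0 := by
    rw [← leadingCoeff_ne_zero, hl2]; positivity
  have hlim : Filter.Tendsto (fun x => eval x (p * derivative (derivative p)) /
      eval x (derivative p ^ 2)) Filter.atTop (nhds (((n : ℝ) - 1) / n)) := by
    have h := div_tendsto_atTop_leadingCoeff_div_of_degree_eq (p * derivative (derivative p))
      (derivative p ^ 2) (by
        rw [degree_eq_natDegree (mul_ne_zero hp0 hr0), degree_eq_natDegree (pow_ne_zero 2 hq0),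
          natDegree_mul hp0 hr0, natDegree_pow, hdeg, hd1, hd2]
        congr 1; omega)
    convert h using 2
    rw [leadingCoeff_mul, leadingCoeff_pow, hl1, hl2]
    field_simp
  have hH : ∀ x, (Hk κ p).eval x = κ * (derivative p).eval x ^ 2
      - p.eval x * (derivative (derivative p)).eval x := by intro x; simp [Hk]
  have hH' : ∀ x, (derivative (Hk κ p)).eval x =
      2 * κ * (derivative p).eval x * (derivative (derivative p)).eval x
      - (derivative p).eval x * (derivative (derivative p)).eval x
      - p.eval x * (derivative (derivative (derivative p))).eval x := by
    intro x; simp [Hk, derivative_pow]; ring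
  simp only [eval_mul, eval_pow] at hlim
  simp only [IsRoot.def, hH, hH'] at hc ⊢
  exact analytic_core _ _ _ _ _ (fun x => p.hasDerivAt x) (fun x => (derivative p).hasDerivAt x)
    (fun x => (derivative (derivative p)).hasDerivAt x)
    (fun x => (derivative (derivative (derivative p))).hasDerivAt x)
    b c _ κ hbc hc facts hlim hκ0 hκ

lemma Hk_neg (κ : ℝ) (p : ℝ[X]) : Hk κ (-p) = Hk κ p := by simp [Hk]

lemma Hk_comp_neg_X (κ : ℝ) (p : ℝ[X]) : Hk κ (p.comp (-X)) = (Hk κ p).comp (-X) := by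
  simp [Hk, derivative_comp]

/-- The right-hand interval, for either sign of the leading coefficient. -/
lemma unique_simple_root (n : ℕ) (hn : 2 ≤ n) (p : ℝ[X]) (hdeg : p.natDegree = n)
    (S : Finset ℝ) (hS : ∀ r ∈ S, (derivative p).IsRoot r)
    (hcard : S.card = n - 1) (b : ℝ) (hb : ∀ r ∈ S, r ≤ b) (c : ℝ) (hbc : b < c)
    (hc : p.IsRoot c) (κ : ℝ) (hκ0 : 0 ≤ κ) (hκ : κ < ((n : ℝ) - 1) / n) :
    ∃ x₀, b < x₀ ∧ (Hk κ p).IsRoot x₀ ∧ (derivative (Hk κ p)).eval x₀ ≠ 0 ∧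
      ∀ y, b < y → (Hk κ p).IsRoot y → y = x₀ := by
  have hp0 : p.leadingCoeff ≠ 0 := by
    rw [Ne, leadingCoeff_eq_zero]; rintro rfl; simp at hdeg; omega
  rcases hp0.lt_or_gt with h | h
  · rw [← Hk_neg]
    exact unique_simple_root_of_pos n hn (-p) (by rwa [natDegree_neg]) (by simpa using h) S
      (by simpa using hS) hcard b hb c hbc (by simpa using hc) κ hκ0 hκ
  · exact unique_simple_root_of_pos n hn p hdeg h S hS hcard b hb c hbc hc κ hκ0 hκ

lemma ZIcount_eq_one (I : Set ℝ) (q : ℝ[X]) (x₀ : ℝ) (hI : x₀ ∈ I) (h : q.IsRoot x₀)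
    (h' : (derivative q).eval x₀ ≠ 0) (hu : ∀ y ∈ I, q.IsRoot y → y = x₀) :
    ZIcount I q = 1 := by
  classical
  have hq : q ≠ 0 := by rintro rfl; simp at h'
  have h1 : q.roots.count x₀ = 1 := by
    rw [count_roots]
    have := (rootMultiplicity_pos hq).2 h
    have := mt (one_lt_rootMultiplicity_iff_isRoot hq).1 (fun ⟨_, b⟩ => h' b)
    omega
  unfold ZIcount
  rw [Multiset.card_eq_one]
  refine ⟨x₀, ?_⟩
  ext y
  rw [Multiset.count_filter, Multiset.count_singleton]
  by_cases hy : y = x₀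
  · subst hy; simp [hI, h1]
  · rw [if_neg hy]
    split_ifs with hyI
    · rw [Multiset.count_eq_zero, mem_roots hq]
      exact fun hr => hy (hu y hyI hr)
    · rfl

theorem stmt17 (n : ℕ) (hn : 2 ≤ n) (p : ℝ[X]) (hdeg : p.natDegree = n)
    (hsimple : ∀ x : ℝ, p.IsRoot x → rootMultiplicity x p = 1)
    (ξ : ℕ → ℝ)
    (hmono : ∀ i j, 1 ≤ i → i < j → j ≤ n - 1 → ξ i < ξ j)
    (hroot : ∀ k, 1 ≤ k → k ≤ n - 1 → (derivative p).IsRoot (ξ k))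
    (hall : ∀ x : ℝ, (derivative p).IsRoot x → ∃ k, 1 ≤ k ∧ k ≤ n - 1 ∧ x = ξ k)
    (κ : ℝ) (hκ0 : 0 ≤ κ) (hκ : κ < ((n : ℝ) - 1) / n) :
    ((∃ x ∈ Set.Iio (ξ 1), p.IsRoot x) → ZIcount (Set.Iio (ξ 1)) (Hk κ p) = 1) ∧
    ((∃ x ∈ Set.Ioi (ξ (n - 1)), p.IsRoot x) →
      ZIcount (Set.Ioi (ξ (n - 1))) (Hk κ p) = 1) := by
  have hinj : Set.InjOn ξ (Finset.Icc 1 (n - 1)) := by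
    intro i hi j hj hij
    simp only [Finset.coe_Icc, Set.mem_Icc] at hi hj
    rcases lt_trichotomy i j with h | h | h
    · exact absurd hij (hmono i j hi.1 h hj.2).ne
    · exact h
    · exact absurd hij (hmono j i hj.1 h hi.2).ne'
  have hle : ∀ i j, 1 ≤ i → i ≤ j → j ≤ n - 1 → ξ i ≤ ξ j := by
    intro i j hi hij hj
    rcases hij.eq_or_lt with rfl | h
    · exact le_rfl
    · exact (hmono i j hi h hj).le
  constructor
  · -- the left-hand interval is the right-hand one for the reflected polynomial `p(-x)`
    rintro ⟨c, hc, hpc⟩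
    obtain ⟨x₀, h1, h2, h3, h4⟩ := unique_simple_root n hn (p.comp (-X))
      (by simp [natDegree_comp, hdeg])
      ((Finset.Icc 1 (n - 1)).image fun k => -ξ k)
      (by
        intro r hr
        obtain ⟨k, hk, rfl⟩ := Finset.mem_image.1 hr
        rw [Finset.mem_Icc] at hk
        simpa [derivative_comp] using hroot k hk.1 hk.2)
      (by
        rw [Finset.card_image_of_injOn (fun i hi j hj h => hinj hi hj (neg_injective h))]
        simp)
      (-ξ 1)
      (by
        intro r hr
        obtain ⟨k, hk, rfl⟩ := Finset.mem_image.1 hr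
        rw [Finset.mem_Icc] at hk
        exact neg_le_neg (hle 1 k le_rfl hk.1 hk.2))
      (-c) (neg_lt_neg hc) (by simpa using hpc) κ hκ0 hκ
    rw [Hk_comp_neg_X] at h2 h3
    simp only [Hk_comp_neg_X] at h4
    refine ZIcount_eq_one _ _ (-x₀) (Set.mem_Iio.2 (by linarith)) (by simpa using h2)
      (by simpa [derivative_comp] using h3) (fun y hy hr => ?_)
    rw [← h4 (-y) (neg_lt_neg hy) (by simpa using hr), neg_neg]
  · rintro ⟨c, hc, hpc⟩
    obtain ⟨x₀, h1, h2, h3, h4⟩ := unique_simple_root n hn p hdeg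
      ((Finset.Icc 1 (n - 1)).image ξ)
      (by
        intro r hr
        obtain ⟨k, hk, rfl⟩ := Finset.mem_image.1 hr
        rw [Finset.mem_Icc] at hk
        exact hroot k hk.1 hk.2)
      (by rw [Finset.card_image_of_injOn hinj]; simp)
      (ξ (n - 1))
      (by
        intro r hr
        obtain ⟨k, hk, rfl⟩ := Finset.mem_image.1 hr
        rw [Finset.mem_Icc] at hk
        exact hle k (n - 1) hk.1 hk.2 le_rfl)
      c hc hpc κ hκ0 hκ
    exact ZIcount_eq_one _ _ x₀ h1 h2 h3 h4
end

section
/- Let T_{2n} denote the Chebyshev polynomial of the first kind of degree 2n. For every integer n ≥ 1 and every ε with 0 < ε < 1/2, there exists a constant C with −1 < C < 0 such that, setting p = T_{2n} + C, for every κ with 0 < κ ≤ 1/2 − ε the rational function Q_κ[p] = H_κ[p]/(p')² has exactly 4n − 2 real zeros counted with multiplicity; equivalently, ∑_{x ∈ ℝ} max(0, rootMultiplicity_x(H_κ[p]) − 2·rootMultiplicity_x(p')) = 4n − 2. -/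
/-!
Write `N = 2n` and `p = T_N + c`. For `κ < 1/2` the polynomial `H_κ[p]` has degree `2N - 2 = 4n - 2`
with negative leading coefficient (`Hk_far`), and it has no zero in common with `p'`
(`deriv_ne_zero_of_Hk_eq_zero`), so the real zeros of `Q_κ[p]` are exactly the real roots of
`H_κ[p]` (`ZQ_eq_card_roots`) and at most `4n - 2` in number. The matching lower bound comes from
sign changes.

* At each of the `N - 1` critical points of `T_N`, all in `(-1, 1)`, the differential equation gives
  `H_κ[p] > 0` (`Hk_pos_critPt`).
* Far to the left and far to the right `H_κ[p] < 0`.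
* Between consecutive critical points there is also a point with `H_κ[p] < 0`, provided `c` is close
  to `-1`. One end `m` of such a gap is a maximum, where `T_N - 1` has a double zero. There
  `H_κ[T_N - 1]` behaves like a negative multiple of `(x - m)²`, because `κ < 1/2`
  (`Hk_neg_near_double_zero`). Fixing one point in each of the finitely many gaps, for the value
  `κ₀ = 1/2 - ε`, strict negativity persists for `c` slightly above `-1`
  (`exists_shift_with_neg_points`), and for all `κ ≤ κ₀` since `H_κ[p]` is increasing in `κ`.

The resulting `N` negative and `N - 1` positive values interlace, which forces `2(N - 1) = 4n - 2`
real roots.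
-/

open Polynomial

/-! ### Sign changes and real zeros -/

lemma Hk_eval (κ : ℝ) (p : ℝ[X]) (x : ℝ) :
    (Hk κ p).eval x = κ * ((derivative p).eval x) ^ 2
      - p.eval x * (derivative (derivative p)).eval x := by
  simp [Hk]

/-- A polynomial with `M` sign changes along a decreasing sequence has at least `M` real roots. -/
lemma le_card_roots_of_sign_changes (q : ℝ[X]) (hq : q ≠ 0) (M : ℕ) (y : ℕ → ℝ)
    (hy : ∀ i < M, y (i + 1) < y i) (hs : ∀ i < M, q.eval (y (i + 1)) * q.eval (y i) < 0) :
    M ≤ Multiset.card q.roots := by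
  have hz : ∀ i : ℕ, ∃ z, i < M → y (i + 1) < z ∧ z < y i ∧ q.eval z = 0 := by
    intro i
    by_cases hi : i < M
    · have hcont : ContinuousOn (fun x => q.eval x) (Set.Icc (y (i + 1)) (y i)) :=
        q.continuous.continuousOn
      rcases mul_neg_iff.1 (hs i hi) with h | h
      · obtain ⟨z, hz, hz0⟩ := intermediate_value_Ioo' (hy i hi).le hcont ⟨h.2, h.1⟩
        exact ⟨z, fun _ => ⟨hz.1, hz.2, hz0⟩⟩
      · obtain ⟨z, hz, hz0⟩ := intermediate_value_Ioo (hy i hi).le hcont ⟨h.1, h.2⟩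
        exact ⟨z, fun _ => ⟨hz.1, hz.2, hz0⟩⟩
    · exact ⟨0, fun h => absurd h hi⟩
  choose z hz using hz
  have hyle : ∀ i j, i ≤ j → j ≤ M → y j ≤ y i := by
    intro i j hij
    induction j, hij using Nat.le_induction with
    | base => intro _; exact le_rfl
    | succ j hj ih => intro h; exact (hy j (by omega)).le.trans (ih (by omega))
  have hlt : ∀ i j, i < j → j < M → z j < z i := fun i j hij hj =>
    ((hz j hj).2.1.trans_le (hyle (i + 1) j hij hj.le)).trans (hz i (hij.trans hj)).1
  have hinj : Set.InjOn z (Finset.range M : Set ℕ) := by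
    intro i hi j hj h
    simp only [Finset.coe_range, Set.mem_Iio] at hi hj
    rcases lt_trichotomy i j with hij | hij | hij
    · exact absurd h (hlt i j hij hj).ne'
    · exact hij
    · exact absurd h (hlt j i hij hi).ne
  have hsub : (Finset.range M).image z ⊆ q.roots.toFinset := by
    intro x hx
    obtain ⟨i, hi, rfl⟩ := Finset.mem_image.1 hx
    rw [Multiset.mem_toFinset, mem_roots hq]
    exact (hz i (Finset.mem_range.1 hi)).2.2
  calc M = ((Finset.range M).image z).card := by
        rw [Finset.card_image_of_injOn hinj, Finset.card_range]
    _ ≤ q.roots.toFinset.card := Finset.card_le_card hsub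
    _ ≤ _ := Multiset.toFinset_card_le _

/-- If `H_κ[p]` and `p'` have no common real zero, no zero of `H_κ[p]` is cancelled in `Q_κ[p]`. -/
lemma ZQ_eq_card_roots (κ : ℝ) (p : ℝ[X])
    (h : ∀ x, (Hk κ p).eval x = 0 → (derivative p).eval x ≠ 0) :
    ZQ κ p = Multiset.card (Hk κ p).roots := by
  classical
  have h1 : ∀ x : ℝ, rootMultiplicity x (Hk κ p) - 2 * rootMultiplicity x (derivative p)
      = (Hk κ p).roots.count x := by
    intro x
    rw [count_roots]
    by_cases hx : (Hk κ p).eval x = 0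
    · rw [rootMultiplicity_eq_zero (p := derivative p) (h x hx)]; simp
    · rw [rootMultiplicity_eq_zero (p := Hk κ p) hx]; simp
  unfold ZQ
  simp only [h1]
  rw [finsum_eq_sum_of_support_subset (s := (Hk κ p).roots.toFinset)]
  · exact Multiset.toFinset_sum_count_eq _
  · intro x hx
    simpa [Multiset.count_ne_zero, and_comm] using hx

/-! ### The sign of `H_κ[p]` near a double zero and near infinity -/

/-- Near a nondegenerate critical zero `m` of `q`, `H_κ[q] ∼ (4κ - 2) g(m)² (x - m)²` where
`q = (x - m)² g`; this is negative for `κ < 1/2`. -/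
lemma Hk_neg_near_double_zero (κ : ℝ) (hκ : κ < 1 / 2) (q : ℝ[X]) (m : ℝ) (h0 : q.eval m = 0)
    (h1 : (derivative q).eval m = 0) (h2 : (derivative (derivative q)).eval m ≠ 0) :
    ∀ᶠ x in nhds m, x ≠ m → (Hk κ q).eval x < 0 := by
  obtain ⟨f, rfl⟩ := dvd_iff_isRoot.2 (show q.IsRoot m from h0)
  have hf : f.IsRoot m := by simpa [derivative_mul] using h1
  obtain ⟨g, rfl⟩ := dvd_iff_isRoot.2 hf
  have hg : g.eval m ≠ 0 := by
    intro hg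
    apply h2
    simp [derivative_mul, hg]
  let G : ℝ → ℝ := fun x => κ * (2 * g.eval x + (x - m) * (derivative g).eval x) ^ 2
    - g.eval x * (2 * g.eval x + 4 * (x - m) * (derivative g).eval x
      + (x - m) ^ 2 * (derivative (derivative g)).eval x)
  have hG : ContinuousAt G m := by
    have := g.continuous
    have := (derivative g).continuous
    have := (derivative (derivative g)).continuous
    fun_prop
  have hGm : G m < 0 := by
    have : G m = (4 * κ - 2) * (g.eval m) ^ 2 := by simp only [G]; ring
    rw [this]
    exact mul_neg_of_neg_of_pos (by linarith) (by positivity)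
  filter_upwards [hG.eventually_lt_const hGm] with x hx hxm
  have : (Hk κ ((X - C m) * ((X - C m) * g))).eval x = (x - m) ^ 2 * G x := by
    rw [Hk_eval]
    simp [derivative_mul, G]
    ring
  rw [this]
  exact mul_neg_of_pos_of_neg (by have := sub_ne_zero.2 hxm; positivity) hx

lemma natDegree_Hk_le (κ : ℝ) (p : ℝ[X]) (N : ℕ) (hN : 2 ≤ N) (hp : p.natDegree = N) :
    (Hk κ p).natDegree ≤ 2 * N - 2 := by
  have h1 := natDegree_derivative_le p
  have h2 := natDegree_derivative_le (derivative p)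
  unfold Hk
  refine (natDegree_sub_le_of_le (m := 2 * N - 2) (n := 2 * N - 2) ?_ ?_).trans (by simp)
  · refine (natDegree_C_mul_le _ _).trans (natDegree_pow_le.trans (by omega))
  · exact natDegree_mul_le.trans (by omega)

lemma coeff_Hk (κ : ℝ) (p : ℝ[X]) (N : ℕ) (hN : 2 ≤ N) (hp : p.natDegree = N) :
    (Hk κ p).coeff (2 * N - 2) = (p.leadingCoeff) ^ 2 * N * (κ * N - (N - 1)) := by
  have h1 := natDegree_derivative_le p
  have h2 := natDegree_derivative_le (derivative p)
  obtain ⟨k, rfl⟩ := Nat.exists_eq_add_of_le' hN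
  have e1 := coeff_mul_add_eq_of_natDegree_le (df := k + 1) (dg := k + 1) (f := derivative p)
    (g := derivative p) (by omega) (by omega)
  have e2 := coeff_mul_add_eq_of_natDegree_le (df := k + 2) (dg := k) (f := p)
    (g := derivative (derivative p)) (by omega) (by omega)
  rw [show 2 * (k + 2) - 2 = (k + 1) + (k + 1) by omega]
  unfold Hk
  rw [coeff_sub, coeff_C_mul, sq, e1, show (k + 1) + (k + 1) = k + 2 + k by omega, e2]
  simp only [coeff_derivative, leadingCoeff, hp]
  push_cast
  ring

/-- For `κ < 1/2` the leading term of `H_κ[p]` has even degree and negative coefficient, so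
`H_κ[p]` is negative near both ends of the real line. -/
lemma Hk_far (κ : ℝ) (hκ : κ < 1 / 2) (p : ℝ[X]) (N : ℕ) (hN : 2 ≤ N) (hp : p.natDegree = N) :
    (Hk κ p).natDegree = 2 * N - 2 ∧ Hk κ p ≠ 0 ∧
      (∃ x, 1 < x ∧ (Hk κ p).eval x < 0) ∧ ∃ x, x < -1 ∧ (Hk κ p).eval x < 0 := by
  have hN' : (2 : ℝ) ≤ N := by exact_mod_cast hN
  have hp0 : p ≠ 0 := by rintro rfl; simp at hp; omega
  have hc : (Hk κ p).coeff (2 * N - 2) < 0 := by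
    rw [coeff_Hk κ p N hN hp]
    have : p.leadingCoeff ≠ 0 := leadingCoeff_ne_zero.2 hp0
    exact mul_neg_of_pos_of_neg (by positivity) (by nlinarith)
  have hd : (Hk κ p).natDegree = 2 * N - 2 :=
    le_antisymm (natDegree_Hk_le κ p N hN hp) (le_natDegree_of_ne_zero hc.ne)
  have hl : (Hk κ p).leadingCoeff < 0 := by rwa [leadingCoeff, hd]
  have hH0 : Hk κ p ≠ 0 := leadingCoeff_ne_zero.1 hl.ne
  have key : ∀ q : ℝ[X], q.natDegree = 2 * N - 2 → q.leadingCoeff < 0 →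
      ∃ x, 1 < x ∧ q.eval x < 0 := by
    intro q hq hql
    have ht := q.tendsto_atBot_of_leadingCoeff_nonpos
      (natDegree_pos_iff_degree_pos.1 (by omega)) hql.le
    exact ((Filter.eventually_gt_atTop 1).and (ht.eventually_lt_atBot 0)).exists
  refine ⟨hd, hH0, key _ hd hl, ?_⟩
  obtain ⟨x, hx, hxn⟩ := key ((Hk κ p).comp (-X)) (by rw [natDegree_comp]; simp [hd]) (by
    rw [leadingCoeff_comp (by simp), hd, show 2 * N - 2 = 2 * (N - 1) by omega, pow_mul]
    simpa using hl)
  exact ⟨-x, by linarith, by simpa using hxn⟩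

/-! ### Chebyshev polynomials and their critical points -/

/-- The Chebyshev differential equation, evaluated. -/
lemma cheb_ode (N : ℕ) (x : ℝ) :
    (1 - x ^ 2) * (derivative (derivative (Chebyshev.T ℝ (N : ℤ)))).eval x
      = x * (derivative (Chebyshev.T ℝ (N : ℤ))).eval x
        - N ^ 2 * (Chebyshev.T ℝ (N : ℤ)).eval x := by
  simpa using congrArg (eval x)
    (Chebyshev.one_sub_X_sq_mul_derivative_derivative_T_eq_poly_in_T (R := ℝ) (N : ℤ))

/-- `(1 - x²) T_N'² = N² (1 - T_N²)`: the difference of the two sides has zero derivative by the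
differential equation, and vanishes at `1`. -/
lemma cheb_pell (N : ℕ) (x : ℝ) :
    (1 - x ^ 2) * ((derivative (Chebyshev.T ℝ (N : ℤ))).eval x) ^ 2
      = N ^ 2 * (1 - ((Chebyshev.T ℝ (N : ℤ)).eval x) ^ 2) := by
  have ode := Chebyshev.one_sub_X_sq_mul_derivative_derivative_T_eq_poly_in_T (R := ℝ) (N : ℤ)
  set T := Chebyshev.T ℝ (N : ℤ) with hT
  let P : ℝ[X] := (1 - X ^ 2) * (derivative T) ^ 2 - (N : ℝ[X]) ^ 2 * (1 - T ^ 2)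
  have hP : derivative P = 0 := by
    simp only [Function.iterate_succ, Function.iterate_zero, Function.comp, id] at ode
    simp only [P, derivative_sub, derivative_mul, derivative_pow, derivative_one, derivative_X,
      derivative_natCast]
    push_cast at ode ⊢
    simp only [map_ofNat]
    linear_combination (2 * derivative T) * ode
  have hc := eq_C_of_derivative_eq_zero hP
  have h1 : P.eval 1 = 0 := by simp [P, hT, Chebyshev.T_eval_one]
  have hx : P.eval x = 0 := by
    rw [hc, eval_C] at h1
    rw [hc, eval_C, h1]
  simp [P] at hx
  linarith

/-- Interlacing form of the sign-change count: `q < 0` at `v 0 > v 1 > ⋯ > v K`, separated by points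
`u k` where `q > 0`. The merged sequence lists `v (i / 2)` at even `i` and `u (i / 2)` at odd `i`. -/
lemma two_mul_le_card_roots (q : ℝ[X]) (hq : q ≠ 0) (K : ℕ) (u v : ℕ → ℝ)
    (h1 : ∀ k < K, v (k + 1) < u k) (h2 : ∀ k < K, u k < v k)
    (hv : ∀ k ≤ K, q.eval (v k) < 0) (hu : ∀ k < K, 0 < q.eval (u k)) :
    2 * K ≤ Multiset.card q.roots := by
  have key : ∀ i < 2 * K, (if (i + 1) % 2 = 0 then v ((i + 1) / 2) else u ((i + 1) / 2))
      < (if i % 2 = 0 then v (i / 2) else u (i / 2)) ∧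
      q.eval (if (i + 1) % 2 = 0 then v ((i + 1) / 2) else u ((i + 1) / 2))
      * q.eval (if i % 2 = 0 then v (i / 2) else u (i / 2)) < 0 := by
    intro i hi
    rcases Nat.even_or_odd' i with ⟨k, rfl | rfl⟩
    · rw [if_neg (by omega), if_pos (by omega), show (2 * k + 1) / 2 = k by omega,
        show 2 * k / 2 = k by omega]
      exact ⟨h2 k (by omega), mul_neg_of_pos_of_neg (hu k (by omega)) (hv k (by omega))⟩
    · rw [if_pos (by omega), if_neg (by omega), show (2 * k + 1) / 2 = k by omega,
        show (2 * k + 1 + 1) / 2 = k + 1 by omega]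
      exact ⟨h1 k (by omega), mul_neg_of_neg_of_pos (hv (k + 1) (by omega)) (hu k (by omega))⟩
  exact le_card_roots_of_sign_changes q hq (2 * K)
    (fun i => if i % 2 = 0 then v (i / 2) else u (i / 2))
    (fun i hi => (key i hi).1) (fun i hi => (key i hi).2)

/-- The points `cos (k π / N)`; for `0 < k < N` these are the critical points of `T_N`, listed in
decreasing order. -/
noncomputable def critPt (N k : ℕ) : ℝ := Real.cos (k * Real.pi / N)

lemma critPt_lt {N j k : ℕ} (hjk : j < k) (hk : k ≤ N) : critPt N k < critPt N j := by
  have hN : (0 : ℝ) < N := by exact_mod_cast (show 0 < N by omega)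
  apply Real.cos_lt_cos_of_nonneg_of_le_pi
  · positivity
  · rw [div_le_iff₀ hN, mul_comm]
    gcongr
  · gcongr

lemma critPt_mem {N k : ℕ} (hk0 : 0 < k) (hk : k < N) : -1 < critPt N k ∧ critPt N k < 1 := by
  have h1 := critPt_lt hk0 hk.le
  have h2 := critPt_lt hk le_rfl
  have hN : (N : ℝ) ≠ 0 := by exact_mod_cast (show N ≠ 0 by omega)
  constructor
  · simpa [critPt, mul_div_assoc, mul_div_cancel₀, hN, mul_div_cancel_left₀] using h2
  · simpa [critPt] using h1

lemma eval_T_critPt {N : ℕ} (k : ℕ) (hN : N ≠ 0) :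
    (Chebyshev.T ℝ (N : ℤ)).eval (critPt N k) = (-1) ^ k := by
  rw [critPt, Chebyshev.eval_T_real_cos_int_mul_pi_div hN, Int.cast_negOnePow]
  simp

lemma eval_deriv_T_critPt {N k : ℕ} (hk0 : 0 < k) (hk : k < N) :
    (derivative (Chebyshev.T ℝ (N : ℤ))).eval (critPt N k) = 0 := by
  have h := cheb_pell N (critPt N k)
  rw [eval_T_critPt k (by omega), ← pow_mul, mul_comm k 2, pow_mul] at h
  obtain ⟨h1, h2⟩ := critPt_mem hk0 hk
  have : 1 - critPt N k ^ 2 ≠ 0 := by nlinarith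
  simpa [this] using h

/-- At an interior critical point `p'' = -N² T_N / (1 - x²)` and `T_N = ±1`, so
`H_κ[p] = N² (1 + c T_N) / (1 - x²) > 0`. -/
lemma Hk_pos_critPt (κ c : ℝ) (hc : -1 < c) (hc0 : c < 0) {N k : ℕ} (hk0 : 0 < k) (hk : k < N) :
    0 < (Hk κ (Chebyshev.T ℝ (N : ℤ) + C c)).eval (critPt N k) := by
  have hN : (0 : ℝ) < N := by exact_mod_cast (show 0 < N by omega)
  have ode := cheb_ode N (critPt N k)
  have hd := eval_deriv_T_critPt hk0 hk
  have ht := eval_T_critPt (N := N) k (by omega)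
  obtain ⟨h1, h2⟩ := critPt_mem hk0 hk
  have hx : 0 < 1 - critPt N k ^ 2 := by nlinarith
  rw [Hk_eval]
  simp only [derivative_add, derivative_C, add_zero, eval_add, eval_C]
  rw [hd] at ode ⊢
  rw [ht] at ode ⊢
  set b := (derivative (derivative (Chebyshev.T ℝ (N : ℤ)))).eval (critPt N k)
  refine pos_of_mul_pos_right (a := 1 - critPt N k ^ 2) ?_ hx.le
  have hN2 : (0 : ℝ) < N ^ 2 := by positivity
  rcases neg_one_pow_eq_or ℝ k with e | e <;> rw [e] at ode ⊢ <;> nlinarith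

/-- A single real point cannot be a zero of both `H_κ[p]` and `p'`: by the quadratic identity
`T_N = ±1` there, so `p ≠ 0`, whence `p'' = 0`, contradicting the differential equation. -/
lemma deriv_ne_zero_of_Hk_eq_zero (κ c : ℝ) (hc : -1 < c) (hc0 : c < 0) {N : ℕ} (hN : N ≠ 0)
    (x : ℝ) (hx : (Hk κ (Chebyshev.T ℝ (N : ℤ) + C c)).eval x = 0) :
    (derivative (Chebyshev.T ℝ (N : ℤ) + C c)).eval x ≠ 0 := by
  have ode := cheb_ode N x
  have pell := cheb_pell N x
  rw [Hk_eval] at hx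
  simp only [derivative_add, derivative_C, add_zero, eval_add, eval_C] at hx ⊢
  intro hd
  rw [hd] at ode pell hx
  have hN' : (N : ℝ) ≠ 0 := by exact_mod_cast hN
  have ht : (Chebyshev.T ℝ (N : ℤ)).eval x ^ 2 = 1 := by
    have : (1 - (Chebyshev.T ℝ (N : ℤ)).eval x ^ 2) = 0 := by simpa [hN'] using pell.symm
    linarith
  have hp : (Chebyshev.T ℝ (N : ℤ)).eval x + c ≠ 0 := by
    intro h
    rw [eq_neg_of_add_eq_zero_left h] at ht
    nlinarith
  have hb : (derivative (derivative (Chebyshev.T ℝ (N : ℤ)))).eval x = 0 := by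
    simpa [hp] using hx
  rw [hb] at ode
  have : (Chebyshev.T ℝ (N : ℤ)).eval x = 0 := by simpa [hN'] using ode
  simp [this] at ht

/-! ### The choice of the constant -/

/-- For `c = -1` every gap between consecutive critical points contains a point where `H_κ < 0`:
one of the two ends of the gap is a maximum with `T_N = 1`, i.e. a double zero of `T_N - 1`. -/
lemma exists_neg_between (κ : ℝ) (hκ : κ < 1 / 2) {N k : ℕ} (hk0 : 0 < k) (hk : k + 1 < N) :
    ∃ w, critPt N (k + 1) < w ∧ w < critPt N k ∧
      (Hk κ (Chebyshev.T ℝ (N : ℤ) + C (-1))).eval w < 0 := by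
  have hlt : critPt N (k + 1) < critPt N k := critPt_lt (by omega) (by omega)
  have near : ∀ j, 0 < j → j < N → Even j → ∀ᶠ x in nhds (critPt N j), x ≠ critPt N j →
      (Hk κ (Chebyshev.T ℝ (N : ℤ) + C (-1))).eval x < 0 := by
    intro j hj0 hj he
    have ht := eval_T_critPt (N := N) j (by omega)
    have hd := eval_deriv_T_critPt hj0 hj
    rw [he.neg_one_pow] at ht
    refine Hk_neg_near_double_zero κ hκ _ _ ?_ ?_ ?_
    · simp [ht]
    · simp [hd]
    · simp only [derivative_add, derivative_C, add_zero]
      intro h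
      have ode := cheb_ode N (critPt N j)
      rw [h, hd, ht] at ode
      have : (N : ℝ) ^ 2 = 0 := by linarith
      have : N = 0 := by simpa using this
      omega
  rcases Nat.even_or_odd k with he | ho
  · have h := (near k hk0 (by omega) he).filter_mono (nhdsWithin_le_nhds (s := Set.Iio (critPt N k)))
    obtain ⟨w, hw, hw'⟩ := (h.and (Ioo_mem_nhdsLT hlt)).exists
    exact ⟨w, hw'.1, hw'.2, hw hw'.2.ne⟩
  · have h := (near (k + 1) (by omega) hk ho.add_one).filter_mono
      (nhdsWithin_le_nhds (s := Set.Ioi (critPt N (k + 1))))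
    obtain ⟨w, hw, hw'⟩ := (h.and (Ioo_mem_nhdsGT hlt)).exists
    exact ⟨w, hw'.1, hw'.2, hw (ne_of_gt hw'.1)⟩

/-- The finitely many strict inequalities of `exists_neg_between` survive a small increase of the
constant term from `-1`. -/
lemma exists_shift_with_neg_points (κ : ℝ) (hκ : κ < 1 / 2) (N : ℕ) :
    ∃ c : ℝ, -1 < c ∧ c < 0 ∧ ∃ w : ℕ → ℝ, ∀ k, 0 < k → k + 1 < N →
      critPt N (k + 1) < w k ∧ w k < critPt N k ∧
      (Hk κ (Chebyshev.T ℝ (N : ℤ) + C c)).eval (w k) < 0 := by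
  have hw : ∀ k, ∃ w, 0 < k → k + 1 < N → critPt N (k + 1) < w ∧ w < critPt N k ∧
      (Hk κ (Chebyshev.T ℝ (N : ℤ) + C (-1))).eval w < 0 := by
    intro k
    by_cases h : 0 < k ∧ k + 1 < N
    · obtain ⟨w, hw⟩ := exists_neg_between κ hκ h.1 h.2
      exact ⟨w, fun _ _ => hw⟩
    · exact ⟨0, fun h1 h2 => absurd ⟨h1, h2⟩ h⟩
  choose w hw using hw
  have hev : ∀ᶠ c in nhds (-1 : ℝ), ∀ k ∈ Finset.range N, 0 < k → k + 1 < N →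
      (Hk κ (Chebyshev.T ℝ (N : ℤ) + C c)).eval (w k) < 0 := by
    rw [Filter.eventually_all_finset]
    intro k _
    by_cases h : 0 < k ∧ k + 1 < N
    · have hcont : Continuous fun c : ℝ => (Hk κ (Chebyshev.T ℝ (N : ℤ) + C c)).eval (w k) := by
        simp only [Hk_eval, derivative_add, derivative_C, add_zero, eval_add, eval_C]
        fun_prop
      filter_upwards [hcont.continuousAt.eventually_lt_const (hw k h.1 h.2).2.2] with c hc _ _
      exact hc
    · exact Filter.Eventually.of_forall fun c h1 h2 => absurd ⟨h1, h2⟩ h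
  obtain ⟨c, hc, hc'⟩ := ((hev.filter_mono (nhdsWithin_le_nhds (s := Set.Ioi (-1)))).and
    (Ioo_mem_nhdsGT (show (-1 : ℝ) < 0 by norm_num))).exists
  exact ⟨c, hc'.1, hc'.2, w, fun k h1 h2 => ⟨(hw k h1 h2).1, (hw k h1 h2).2.1,
    hc k (Finset.mem_range.2 (by omega)) h1 h2⟩⟩

/-- `H_κ[p]` is increasing in `κ`. -/
lemma Hk_eval_mono {κ κ' : ℝ} (h : κ ≤ κ') (p : ℝ[X]) (x : ℝ) :
    (Hk κ p).eval x ≤ (Hk κ' p).eval x := by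
  rw [Hk_eval, Hk_eval]
  gcongr

/-! ### Counting the zeros -/

theorem stmt19 (n : ℕ) (hn : 1 ≤ n) (ε : ℝ) (hε0 : 0 < ε) (hε : ε < 1 / 2) :
    ∃ c : ℝ, -1 < c ∧ c < 0 ∧
      ∀ κ : ℝ, 0 < κ → κ ≤ 1 / 2 - ε →
        ZQ κ (Polynomial.Chebyshev.T ℝ (2 * (n : ℤ)) + C c) = 4 * n - 2 := by
  obtain ⟨N, hN⟩ : ∃ N : ℕ, N = 2 * n := ⟨_, rfl⟩
  have hNZ : (2 * (n : ℤ)) = (N : ℤ) := by subst hN; push_cast; rfl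
  rw [hNZ]
  obtain ⟨c, hc, hc0, w, hw⟩ := exists_shift_with_neg_points (1 / 2 - ε) (by linarith) N
  refine ⟨c, hc, hc0, fun κ _ hκ => ?_⟩
  set p := Chebyshev.T ℝ (N : ℤ) + C c with hp
  have hdeg : p.natDegree = N := by
    rw [hp, natDegree_add_C, Chebyshev.natDegree_T]; simp
  obtain ⟨hd, hH0, ⟨x₁, hx₁, hx₁n⟩, ⟨x₂, hx₂, hx₂n⟩⟩ :=
    Hk_far κ (by linarith) p N (by omega) hdeg
  rw [ZQ_eq_card_roots κ p fun x hx =>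
    deriv_ne_zero_of_Hk_eq_zero κ c hc hc0 (by omega) x hx]
  apply le_antisymm
  · exact (card_roots' _).trans (by omega)
  have hwn : ∀ k, 0 < k → k + 1 < N → (Hk κ p).eval (w k) < 0 := fun k h1 h2 =>
    (Hk_eval_mono hκ p (w k)).trans_lt (hw k h1 h2).2.2
  have h := two_mul_le_card_roots (Hk κ p) hH0 (N - 1) (fun k => critPt N (k + 1))
    (fun k => if k = 0 then x₁ else if k = N - 1 then x₂ else w k) ?_ ?_ ?_ ?_
  · omega
  · intro k hk
    have := critPt_mem (N := N) (k := k + 1) (by omega) (by omega)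
    rw [if_neg (by omega)]
    split_ifs with h
    · linarith
    · exact (hw (k + 1) (by omega) (by omega)).2.1
  · intro k hk
    have := critPt_mem (N := N) (k := k + 1) (by omega) (by omega)
    split_ifs with h h'
    · linarith
    · omega
    · exact (hw k (by omega) (by omega)).1
  · intro k hk
    split_ifs with h h'
    · exact hx₁n
    · exact hx₂n
    · exact hwn k (by omega) (by omega)
  · intro k hk
    exact Hk_pos_critPt κ c hc hc0 (by omega) (by omega)
end
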